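/- arXiv:2103.12225 — 5 statements merged into one kernel-verified Lean document; each statement's English description precedes it below -/
import Mathlib

section
/- For every integer n ≥ 5, the achromatic arboricity of the complete graph K_n satisfies A_α(K_n) ≤ ⌊max over positive integers x of min{ n(n−1)/(2x), x(n−x−1)+1 }⌋. -/
/-- A partition of the edge set of `G` into `k` nonempty forests (acyclic classes)
such that the union of any two distinct parts contains a cycle. -/
def IsCompleteForestPartition {V : Type*} (G : SimpleGraph V) (k : ℕ)
    (P : Fin k → Set (Sym2 V)) : Prop :=
  (∀ i, (P i).Nonempty) ∧
  (∀ i j, i ≠ j → Disjoint (P i) (P j)) ∧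
  (⋃ i, P i) = G.edgeSet ∧
  (∀ i, (SimpleGraph.fromEdgeSet (P i)).IsAcyclic) ∧
  (∀ i j, i ≠ j → ¬ (SimpleGraph.fromEdgeSet (P i ∪ P j)).IsAcyclic)

/-- The achromatic arboricity of `G`: the largest number of parts in a partition of
`E(G)` into forests such that the union of any two parts contains a cycle. -/
noncomputable def achromaticArboricity {V : Type*} (G : SimpleGraph V) : ℕ :=
  sSup {k | ∃ P : Fin k → Set (Sym2 V), IsCompleteForestPartition G k P}

/-!
In a partition of `E(G)` into `k` forests, let `F` be a smallest part and `x` its number of edges,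
so that `k x ≤ |E(G)|`. If another part `P` closes a cycle with `F`, then either some edge of `P`
joins two vertices of one component of `F`, or at least two edges of `P` meet non-isolated vertices
of `F`: otherwise `P` minus at most one edge is vertex-disjoint from `F`, and that edge joins two
components of what remains. Count the pairs of vertices inside a component of `F` and add the number
of pairs meeting a non-isolated vertex of `F`. Each other part contributes at least `2` to the total
and `F` itself contributes `2 x`, whereas for a graph with `x` edges on `n ≥ 2 x + 1` vertices the
total is at most `2 x (n - x)`, attained by matchings. Hence `k ≤ x (n - x - 1) + 1`.

If `2 x + 1 > n`, then `k x ≤ n (n - 1) / 2` already gives `k ≤ n - 1`, and the bound holds with `1`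
in place of `x`.
-/


section Graphs

variable {V : Type*}

/-- The transitive closure of a graph: two distinct vertices are adjacent when they lie in the same
connected component of `G`. -/
def reachabilityGraph (G : SimpleGraph V) : SimpleGraph V :=
  .fromRel G.Reachable

/-- The graph of all pairs of distinct vertices that meet the vertex set `S`. -/
def touchingGraph (S : Set V) : SimpleGraph V :=
  .fromRel fun u _ ↦ u ∈ S

@[simp]
lemma reachabilityGraph_adj {G : SimpleGraph V} {u v : V} :
    (reachabilityGraph G).Adj u v ↔ u ≠ v ∧ G.Reachable u v := by
  simp [reachabilityGraph, G.reachable_comm (u := v)]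

@[simp]
lemma touchingGraph_adj {S : Set V} {u v : V} :
    (touchingGraph S).Adj u v ↔ u ≠ v ∧ (u ∈ S ∨ v ∈ S) := by
  simp [touchingGraph]

lemma le_reachabilityGraph (G : SimpleGraph V) : G ≤ reachabilityGraph G :=
  fun _ _ h ↦ reachabilityGraph_adj.2 ⟨h.ne, h.reachable⟩

lemma mem_support_of_reachable_of_ne {G : SimpleGraph V} {u v : V} (h : G.Reachable u v)
    (huv : u ≠ v) : u ∈ G.support := by
  obtain ⟨p⟩ := h
  exact ⟨_, p.adj_snd (p.not_nil_of_ne huv)⟩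

lemma reachabilityGraph_le_touchingGraph_support (G : SimpleGraph V) :
    reachabilityGraph G ≤ touchingGraph G.support := by
  intro u v h
  rw [reachabilityGraph_adj] at h
  exact touchingGraph_adj.2 ⟨h.1, .inl (mem_support_of_reachable_of_ne h.2 h.1)⟩

lemma walk_edges_subset_left {F P H : SimpleGraph V} (hFP : Disjoint F.support P.support)
    (hH : H ≤ F ⊔ P) {u v : V} (p : H.Walk u v) (hu : u ∉ P.support) :
    ∀ e ∈ p.edges, e ∈ F.edgeSet := by
  induction p with
  | nil => simp
  | cons huv p ih =>
    have hF := (hH huv).resolve_right fun hP ↦ hu hP.mem_support_left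
    rw [SimpleGraph.Walk.edges_cons, List.forall_mem_cons]
    exact ⟨hF, ih (Set.disjoint_left.1 hFP hF.mem_support_right)⟩

lemma walk_edges_subset_or {F P H : SimpleGraph V} (hFP : Disjoint F.support P.support)
    (hH : H ≤ F ⊔ P) {u v : V} (p : H.Walk u v) :
    (∀ e ∈ p.edges, e ∈ F.edgeSet) ∨ ∀ e ∈ p.edges, e ∈ P.edgeSet := by
  by_cases hu : u ∈ P.support
  · exact .inr <| walk_edges_subset_left hFP.symm (hH.trans (sup_comm F P).le) p
      (Set.disjoint_right.1 hFP hu)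
  · exact .inl <| walk_edges_subset_left hFP hH p hu

lemma reachable_or_reachable_of_disjoint_support {F P : SimpleGraph V}
    (hFP : Disjoint F.support P.support) {u v : V} (h : (F ⊔ P).Reachable u v) :
    F.Reachable u v ∨ P.Reachable u v := by
  obtain ⟨p⟩ := h
  exact (walk_edges_subset_or hFP le_rfl p).imp (⟨p.transfer F ·⟩) (⟨p.transfer P ·⟩)

lemma isAcyclic_sup_of_disjoint_support {F P : SimpleGraph V} (hF : F.IsAcyclic)
    (hP : P.IsAcyclic) (hFP : Disjoint F.support P.support) : (F ⊔ P).IsAcyclic :=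
  fun _ p hp ↦ (walk_edges_subset_or hFP le_rfl p).elim
    (fun h ↦ hF _ (hp.transfer h)) fun h ↦ hP _ (hp.transfer h)

lemma isAcyclic_sup_of_subsingleton_inter_touchingGraph {F P : SimpleGraph V} (hF : F.IsAcyclic)
    (hP : P.IsAcyclic) (hreach : Disjoint P (reachabilityGraph F))
    (htouch : (P.edgeSet ∩ (touchingGraph F.support).edgeSet).Subsingleton) :
    (F ⊔ P).IsAcyclic := by
  by_cases hdisj : Disjoint F.support P.support
  · exact isAcyclic_sup_of_disjoint_support hF hP hdisj
  obtain ⟨a, haF, b, hab⟩ := Set.not_disjoint_iff.1 hdisj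
  let P₀ := P.deleteEdges {s(a, b)}
  have hP₀ : Disjoint F.support P₀.support := by
    refine Set.disjoint_left.2 fun c hcF ⟨d, hcd⟩ ↦ ?_
    have hcd := SimpleGraph.deleteEdges_adj.1 hcd
    exact hcd.2 <| htouch ⟨hcd.1, touchingGraph_adj.2 ⟨hcd.1.ne, .inl hcF⟩⟩
      ⟨hab, touchingGraph_adj.2 ⟨hab.ne, .inl haF⟩⟩
  have hnot_reachable : ¬ (F ⊔ P₀).Reachable a b := by
    intro h
    rcases reachable_or_reachable_of_disjoint_support hP₀ h with h | h
    · exact SimpleGraph.disjoint_left.1 hreach a b hab (reachabilityGraph_adj.2 ⟨hab.ne, h⟩)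
    · exact SimpleGraph.isAcyclic_iff_forall_adj_isBridge.1 hP hab h
  have hsup : F ⊔ P ≤ (F ⊔ P₀) ⊔ SimpleGraph.edge a b := by
    rw [sup_assoc]
    exact sup_le_sup_left le_sdiff_sup F
  have hF₀ := isAcyclic_sup_of_disjoint_support hF (hP.anti (SimpleGraph.deleteEdges_le _)) hP₀
  exact (hF₀.sup_edge_of_not_reachable hnot_reachable).anti hsup

lemma two_le_ncard_inter_add_ncard_inter [Finite V] {F P : SimpleGraph V} (hF : F.IsAcyclic)
    (hP : P.IsAcyclic) (hFP : ¬ (F ⊔ P).IsAcyclic) :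
    2 ≤ (P.edgeSet ∩ (reachabilityGraph F).edgeSet).ncard +
      (P.edgeSet ∩ (touchingGraph F.support).edgeSet).ncard := by
  have hmono : P.edgeSet ∩ (reachabilityGraph F).edgeSet ⊆
      P.edgeSet ∩ (touchingGraph F.support).edgeSet :=
    Set.inter_subset_inter_right _ <|
      SimpleGraph.edgeSet_mono (reachabilityGraph_le_touchingGraph_support F)
  by_cases hreach : Disjoint P (reachabilityGraph F)
  · have htouch := mt (isAcyclic_sup_of_subsingleton_inter_touchingGraph hF hP hreach) hFP
    rw [← Set.ncard_le_one_iff_subsingleton] at htouch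
    omega
  · rw [← SimpleGraph.disjoint_edgeSet, Set.not_disjoint_iff_nonempty_inter,
      ← Set.ncard_pos] at hreach
    have := Set.ncard_le_ncard hmono
    omega

end Graphs

section Counting

open Finset

variable {V : Type*}

lemma ncard_edgeSet_eq_card_edgeFinset (G : SimpleGraph V) [Fintype G.edgeSet] :
    G.edgeSet.ncard = #G.edgeFinset := by
  rw [← SimpleGraph.coe_edgeFinset, Set.ncard_coe_finset]

lemma ncard_neighborSet_reachabilityGraph (G : SimpleGraph V) (v : V) :
    ((reachabilityGraph G).neighborSet v).ncard = (G.connectedComponentMk v).supp.ncard - 1 := by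
  have hnbr : (reachabilityGraph G).neighborSet v = (G.connectedComponentMk v).supp \ {v} := by
    ext w
    simp [and_comm, eq_comm]
  rw [hnbr]
  exact Set.ncard_sdiff_singleton_of_mem rfl

section Finite

variable [Finite V]

lemma ncard_supp_pos {G : SimpleGraph V} (c : G.ConnectedComponent) : 0 < c.supp.ncard :=
  (Set.ncard_pos (Set.toFinite _)).2 c.nonempty_supp

lemma mem_support_iff_one_lt_ncard_supp {G : SimpleGraph V} {v : V} :
    v ∈ G.support ↔ 1 < (G.connectedComponentMk v).supp.ncard := by
  rw [Set.one_lt_ncard_iff_nontrivial]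
  constructor
  · rintro ⟨w, h⟩
    exact ⟨v, rfl, w, SimpleGraph.ConnectedComponent.sound h.symm.reachable, h.ne⟩
  · intro h
    obtain ⟨w, hw, hwv⟩ := h.exists_ne v
    exact mem_support_of_reachable_of_ne (SimpleGraph.ConnectedComponent.exact hw).symm hwv.symm

end Finite

section Fintype

variable [Fintype V]

lemma two_mul_ncard_edgeSet (G : SimpleGraph V) :
    2 * G.edgeSet.ncard = ∑ v, (G.neighborSet v).ncard := by
  classical
  rw [ncard_edgeSet_eq_card_edgeFinset, ← G.sum_degrees_eq_twice_card_edges]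
  refine sum_congr rfl fun v _ ↦ ?_
  rw [← G.card_neighborSet_eq_degree, ← Nat.card_eq_fintype_card, Nat.card_coe_set_eq]

lemma two_mul_ncard_edgeSet_le (G : SimpleGraph V) :
    2 * G.edgeSet.ncard ≤ Fintype.card V * (Fintype.card V - 1) := by
  classical
  have h := G.card_edgeFinset_le_card_choose_two
  rw [← ncard_edgeSet_eq_card_edgeFinset, Nat.choose_two_right] at h
  omega

lemma card_filter_mem_eq_ncard (S : Set V) [DecidablePred (· ∈ S)] : #{v | v ∈ S} = S.ncard := by
  rw [← Set.ncard_coe_finset, coe_filter_univ, Set.ofPred_mem_eq]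

lemma two_mul_ncard_edgeSet_touchingGraph (S : Set V) :
    2 * ((touchingGraph S).edgeSet.ncard : ℤ) =
      S.ncard * (2 * Fintype.card V - S.ncard - 1) := by
  classical
  have hdeg (v : V) : (((touchingGraph S).neighborSet v).ncard : ℤ) =
      S.ncard + if v ∈ S then Fintype.card V - 1 - (S.ncard : ℤ) else 0 := by
    split_ifs with hv
    · have hnbr : (touchingGraph S).neighborSet v = {v}ᶜ := by
        ext w
        simp [hv, eq_comm]
      have hcompl := Set.ncard_add_ncard_compl {v}
      rw [Set.ncard_singleton, Nat.card_eq_fintype_card] at hcompl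
      rw [hnbr]
      omega
    · have hnbr : (touchingGraph S).neighborSet v = S := by
        ext w
        simpa [hv] using fun hw ↦ (ne_of_mem_of_not_mem hw hv).symm
      simp [hnbr]
  have hsum := congrArg (Nat.cast (R := ℤ)) (two_mul_ncard_edgeSet (touchingGraph S))
  push_cast [hdeg, sum_add_distrib, sum_ite, card_filter_mem_eq_ncard, sum_const, card_univ,
    nsmul_eq_mul] at hsum
  rw [hsum]
  ring

variable (G : SimpleGraph V) [Fintype G.ConnectedComponent]

lemma card_le_card_connectedComponent_add_ncard_edgeSet :
    Fintype.card V ≤ Fintype.card G.ConnectedComponent + G.edgeSet.ncard := by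
  classical
  cases isEmpty_or_nonempty V
  · simp
  obtain ⟨v₀⟩ := ‹Nonempty V›
  let c₀ := G.connectedComponentMk v₀
  let rep : G.ConnectedComponent ↪ V := ⟨Quot.out, Function.LeftInverse.injective Quot.out_eq⟩
  have hrep (v : V) : G.Reachable (rep (G.connectedComponentMk v)) v :=
    SimpleGraph.ConnectedComponent.exact (Quot.out_eq _)
  let T := (SimpleGraph.starGraph c₀).map rep
  have hT (c d : G.ConnectedComponent) : T.Reachable (rep c) (rep d) :=
    ((SimpleGraph.connected_starGraph c₀).preconnected c d).map
      (SimpleGraph.Embedding.map rep _).toHom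
  have hconn : (G ⊔ T).Connected :=
    { preconnected u v := ((hrep u).symm.mono le_sup_left).trans
        (((hT _ _).mono le_sup_right).trans ((hrep v).mono le_sup_left))
      nonempty := ⟨v₀⟩ }
  have hTcard : T.edgeSet.ncard + 1 = Fintype.card G.ConnectedComponent := by
    rw [← (SimpleGraph.isTree_starGraph c₀).card_edgeFinset, ncard_edgeSet_eq_card_edgeFinset,
      SimpleGraph.card_edgeFinset_map]
  have hcard := hconn.card_vert_le_card_edgeSet_add_one
  rw [Nat.card_eq_fintype_card, Nat.card_coe_set_eq, SimpleGraph.edgeSet_sup] at hcard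
  have := Set.ncard_union_le G.edgeSet T.edgeSet
  omega

lemma sum_comp_connectedComponentMk {M : Type*} [AddCommMonoid M] (g : G.ConnectedComponent → M) :
    ∑ v, g (G.connectedComponentMk v) = ∑ c, c.supp.ncard • g c := by
  classical
  rw [← sum_fiberwise univ G.connectedComponentMk]
  refine sum_congr rfl fun c _ ↦ ?_
  rw [sum_congr rfl fun v hv ↦ congrArg g (mem_filter.1 hv).2, sum_const,
    ← Set.ncard_coe_finset, coe_filter]
  simp [SimpleGraph.ConnectedComponent.supp]

end Fintype

section Components

variable (G : SimpleGraph V) [Fintype G.ConnectedComponent]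

/-- The components of `G` with at least two vertices. -/
noncomputable def nontrivialComponents : Finset G.ConnectedComponent :=
  {c | 1 < c.supp.ncard}

/-- The number of vertices of `G` left over when two vertices are removed from each component with
at least two vertices and one from each singleton component; the truncated subtraction handles the
singletons. -/
noncomputable def componentExcess : ℕ :=
  ∑ c : G.ConnectedComponent, (c.supp.ncard - 2)

lemma card_eq_card_add_card_nontrivialComponents_add_componentExcess [Fintype V] :
    Fintype.card V =
      Fintype.card G.ConnectedComponent + #(nontrivialComponents G) + componentExcess G := by
  have hcount := sum_comp_connectedComponentMk G fun _ ↦ 1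
  have hsplit (c : G.ConnectedComponent) :
      c.supp.ncard * 1 = 1 + (if 1 < c.supp.ncard then 1 else 0) + (c.supp.ncard - 2) := by
    have := ncard_supp_pos c
    split_ifs <;> omega
  simpa [hsplit, sum_add_distrib, nontrivialComponents, componentExcess] using hcount

lemma ncard_support [Finite V] :
    G.support.ncard = 2 * #(nontrivialComponents G) + componentExcess G := by
  classical
  have := Fintype.ofFinite V
  have hcount := sum_comp_connectedComponentMk G fun c ↦ if 1 < c.supp.ncard then 1 else 0
  have hsplit (c : G.ConnectedComponent) : c.supp.ncard * (if 1 < c.supp.ncard then 1 else 0) =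
      2 * (if 1 < c.supp.ncard then 1 else 0) + (c.supp.ncard - 2) := by
    have := ncard_supp_pos c
    split_ifs <;> omega
  simp only [smul_eq_mul, hsplit, sum_add_distrib, ← mul_sum, ← card_filter,
    ← mem_support_iff_one_lt_ncard_supp, card_filter_mem_eq_ncard] at hcount
  exact hcount

lemma two_mul_ncard_edgeSet_reachabilityGraph_le [Finite V] :
    2 * (reachabilityGraph G).edgeSet.ncard ≤
      componentExcess G ^ 2 + 3 * componentExcess G + 2 * #(nontrivialComponents G) := by
  have := Fintype.ofFinite V
  have hsplit (c : G.ConnectedComponent) : c.supp.ncard * (c.supp.ncard - 1) =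
      (c.supp.ncard - 2) ^ 2 + 3 * (c.supp.ncard - 2) +
        2 * if 1 < c.supp.ncard then 1 else 0 := by
    rcases h : c.supp.ncard with _ | _ | t
    · exact absurd h (ncard_supp_pos c).ne'
    · simp
    · rw [if_pos (by omega), Nat.add_sub_cancel, show t + 1 + 1 - 2 = t from rfl]
      ring
  simp_rw [two_mul_ncard_edgeSet, ncard_neighborSet_reachabilityGraph,
    sum_comp_connectedComponentMk G fun c ↦ c.supp.ncard - 1, smul_eq_mul, hsplit,
    sum_add_distrib, ← mul_sum, ← card_filter]
  exact Nat.add_le_add_right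
    (Nat.add_le_add_right (sum_sq_le_sq_sum_of_nonneg fun _ _ ↦ Nat.zero_le _) _) _

end Components

lemma ncard_edgeSet_reachabilityGraph_add_ncard_edgeSet_touchingGraph_le [Fintype V]
    (G : SimpleGraph V) (h : 2 * G.edgeSet.ncard + 1 ≤ Fintype.card V) :
    ((reachabilityGraph G).edgeSet.ncard : ℤ) + (touchingGraph G.support).edgeSet.ncard ≤
      2 * G.edgeSet.ncard * (Fintype.card V - G.edgeSet.ncard) := by
  have := Fintype.ofFinite G.ConnectedComponent
  have hreach := two_mul_ncard_edgeSet_reachabilityGraph_le G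
  have htouch := two_mul_ncard_edgeSet_touchingGraph G.support
  have hvertices := card_eq_card_add_card_nontrivialComponents_add_componentExcess G
  have hcomponents := card_le_card_connectedComponent_add_ncard_edgeSet G
  rw [ncard_support] at htouch
  set c := #(nontrivialComponents G)
  set d := componentExcess G
  set x := G.edgeSet.ncard
  set n := Fintype.card V
  have hcd : c + d ≤ x := by omega
  zify at hreach h hcd
  push_cast at htouch
  -- Twice the slack is `2 * d * (n - 2 * (c + d) - 1)` if `x = c + d`; `hx` compares `x * (n - x)`
  -- with its value at `c + d`.
  have hd : 0 ≤ (d : ℤ) * (n - 2 * (c + d) - 1) := mul_nonneg (by positivity) (by linarith)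
  have hx : 0 ≤ ((x : ℤ) - (c + d)) * (n - x - (c + d)) := mul_nonneg (by linarith) (by linarith)
  linarith

end Counting

namespace IsCompleteForestPartition

open Finset

variable {V : Type*} {G : SimpleGraph V} {k : ℕ} {P : Fin k → Set (Sym2 V)}

lemma edgeSet_fromEdgeSet (hP : IsCompleteForestPartition G k P) (i : Fin k) :
    (SimpleGraph.fromEdgeSet (P i)).edgeSet = P i := by
  obtain ⟨-, -, hunion, -, -⟩ := hP
  have hsub : P i ⊆ G.edgeSet := hunion ▸ Set.subset_iUnion P i
  rw [SimpleGraph.edgeSet_fromEdgeSet, sdiff_eq_left]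
  exact ((SimpleGraph.edgeSet_eq_iff G _).1 rfl).2.mono_left hsub

lemma sum_ncard_inter [Finite V] (hP : IsCompleteForestPartition G k P) (S : Set (Sym2 V)) :
    ∑ i, (P i ∩ S).ncard = (G.edgeSet ∩ S).ncard := by
  obtain ⟨-, hdisj, hunion, -, -⟩ := hP
  rw [← hunion, Set.iUnion_inter, Set.ncard_iUnion_of_finite (fun _ ↦ Set.toFinite _),
    finsum_eq_sum_of_fintype]
  exact fun i j hij ↦ (hdisj i j hij).mono Set.inter_subset_left Set.inter_subset_left

lemma exists_mul_ncard_le [Finite V] (hP : IsCompleteForestPartition G k P) (hk : 0 < k) :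
    ∃ i, k * (P i).ncard ≤ G.edgeSet.ncard := by
  have : Nonempty (Fin k) := ⟨⟨0, hk⟩⟩
  obtain ⟨i, hi⟩ := Finite.exists_min fun i ↦ (P i).ncard
  refine ⟨i, ?_⟩
  calc k * (P i).ncard = ∑ _j : Fin k, (P i).ncard := by simp
    _ ≤ ∑ j, (P j).ncard := sum_le_sum fun j _ ↦ hi j
    _ = G.edgeSet.ncard := by simpa using hP.sum_ncard_inter Set.univ

lemma two_mul_ncard_add_le [Finite V] (hP : IsCompleteForestPartition G k P) (i : Fin k) :
    2 * (P i).ncard + 2 * (k - 1) ≤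
      (reachabilityGraph (.fromEdgeSet (P i))).edgeSet.ncard +
        (touchingGraph (SimpleGraph.fromEdgeSet (P i)).support).edgeSet.ncard := by
  set F := SimpleGraph.fromEdgeSet (P i)
  set A := (reachabilityGraph F).edgeSet
  set B := (touchingGraph F.support).edgeSet
  have hPA : P i ⊆ A :=
    (hP.edgeSet_fromEdgeSet i).ge.trans <| SimpleGraph.edgeSet_mono <| le_reachabilityGraph F
  have hAB : A ⊆ B := SimpleGraph.edgeSet_mono <| reachabilityGraph_le_touchingGraph_support F
  have hother : ∀ j ∈ univ.erase i, 2 ≤ (P j ∩ A).ncard + (P j ∩ B).ncard := by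
    intro j hj
    have ⟨_, _, _, hacyclic, hcycle⟩ := hP
    have h := hcycle i j (ne_of_mem_erase hj).symm
    rw [SimpleGraph.fromEdgeSet_union] at h
    have h := two_le_ncard_inter_add_ncard_inter (hacyclic i) (hacyclic j) h
    rwa [hP.edgeSet_fromEdgeSet] at h
  have hsum := card_nsmul_le_sum _ _ _ hother
  rw [card_erase_of_mem (mem_univ i), card_univ, Fintype.card_fin, smul_eq_mul] at hsum
  calc 2 * (P i).ncard + 2 * (k - 1)
      ≤ ((P i ∩ A).ncard + (P i ∩ B).ncard) +
          ∑ j ∈ univ.erase i, ((P j ∩ A).ncard + (P j ∩ B).ncard) := by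
        rw [Set.inter_eq_left.2 hPA, Set.inter_eq_left.2 (hPA.trans hAB)]
        omega
    _ = ∑ j, ((P j ∩ A).ncard + (P j ∩ B).ncard) :=
        add_sum_erase univ (fun j ↦ (P j ∩ A).ncard + (P j ∩ B).ncard) (mem_univ i)
    _ = (G.edgeSet ∩ A).ncard + (G.edgeSet ∩ B).ncard := by
        rw [sum_add_distrib, hP.sum_ncard_inter, hP.sum_ncard_inter]
    _ ≤ A.ncard + B.ncard :=
        add_le_add (Set.ncard_le_ncard Set.inter_subset_right)
          (Set.ncard_le_ncard Set.inter_subset_right)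

variable [Fintype V]

lemma le_mul_add_one (hP : IsCompleteForestPartition G k P) (i : Fin k)
    (hi : 2 * (P i).ncard + 1 ≤ Fintype.card V) :
    (k : ℤ) ≤ (P i).ncard * (Fintype.card V - (P i).ncard - 1) + 1 := by
  have hlower := hP.two_mul_ncard_add_le i
  have hupper := ncard_edgeSet_reachabilityGraph_add_ncard_edgeSet_touchingGraph_le
    (.fromEdgeSet (P i)) (by rwa [hP.edgeSet_fromEdgeSet])
  rw [hP.edgeSet_fromEdgeSet] at hupper
  zify at hlower
  rw [Nat.cast_pred i.pos] at hlower
  linarith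

lemma exists_le_min [Nonempty V] (hP : IsCompleteForestPartition G k P) :
    ∃ x : ℕ, 0 < x ∧ (k : ℝ) ≤
      min (G.edgeSet.ncard / x : ℝ) (x * (Fintype.card V - x - 1) + 1) := by
  have of_one (h_edges : k ≤ G.edgeSet.ncard) (h_card : k + 1 ≤ Fintype.card V) :
      ∃ x : ℕ, 0 < x ∧ (k : ℝ) ≤
        min (G.edgeSet.ncard / x : ℝ) (x * (Fintype.card V - x - 1) + 1) := by
    rify at h_edges h_card
    exact ⟨1, one_pos, le_min (by simpa using h_edges) (by push_cast; linarith)⟩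
  rcases Nat.eq_zero_or_pos k with rfl | hk
  · exact of_one (Nat.zero_le _) (by simpa using! Fintype.card_pos)
  obtain ⟨i, hi⟩ := hP.exists_mul_ncard_le hk
  have hx : 0 < (P i).ncard := (Set.ncard_pos (Set.toFinite _)).2 (hP.1 i)
  rcases le_or_gt (2 * (P i).ncard + 1) (Fintype.card V) with hsmall | hlarge
  · refine ⟨_, hx, le_min ?_ ?_⟩
    · rw [le_div_iff₀ (by positivity)]
      exact_mod_cast hi
    · exact_mod_cast hP.le_mul_add_one i hsmall
  · refine of_one ((Nat.le_mul_of_pos_right k hx).trans hi) ?_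
    have hmul : Fintype.card V * k ≤ Fintype.card V * (Fintype.card V - 1) := by
      have := two_mul_ncard_edgeSet_le G
      nlinarith
    have := Nat.le_of_mul_le_mul_left hmul Fintype.card_pos
    have := Fintype.card_pos (α := V)
    omega

end IsCompleteForestPartition

lemma achromaticArboricity_le_of_forall {V : Type*} {G : SimpleGraph V} {r : ℝ} (hr : 0 ≤ r)
    (h : ∀ k P, IsCompleteForestPartition G k P → (k : ℝ) ≤ r) :
    (achromaticArboricity G : ℝ) ≤ r := by
  refine (Nat.le_floor_iff hr).1 (csSup_le' ?_)
  rintro k ⟨P, hP⟩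
  exact Nat.le_floor (h k P hP)

lemma bddAbove_min_div {m : ℝ} (hm : 0 ≤ m) (g : ℕ → ℝ) :
    BddAbove {y : ℝ | ∃ x : ℕ, 0 < x ∧ y = min (m / x) (g x)} := by
  refine ⟨m, ?_⟩
  rintro _ ⟨x, hx, rfl⟩
  exact (min_le_left _ _).trans (div_le_self hm (by exact_mod_cast hx))

theorem achromaticArboricity_le_floor_max_min_general {V : Type*} [Fintype V] [Nonempty V]
    (G : SimpleGraph V) :
    (achromaticArboricity G : ℝ) ≤
      (⌊sSup {y : ℝ | ∃ x : ℕ, 0 < x ∧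
        y = min (G.edgeSet.ncard / x : ℝ) (x * (Fintype.card V - x - 1) + 1)}⌋ : ℝ) := by
  set S := {y : ℝ | ∃ x : ℕ, 0 < x ∧
    y = min (G.edgeSet.ncard / x : ℝ) (x * (Fintype.card V - x - 1) + 1)}
  have hbdd : BddAbove S := bddAbove_min_div (by positivity) _
  have hnonneg : 0 ≤ sSup S := by
    refine le_csSup_of_le hbdd ⟨1, one_pos, rfl⟩ (le_min (by positivity) ?_)
    have : (1 : ℝ) ≤ Fintype.card V := by exact_mod_cast Fintype.card_pos
    push_cast
    linarith
  have hle : (achromaticArboricity G : ℝ) ≤ sSup S := by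
    refine achromaticArboricity_le_of_forall hnonneg fun k P hP ↦ ?_
    obtain ⟨x, hx, hkx⟩ := hP.exists_le_min
    exact le_csSup_of_le hbdd ⟨x, hx, rfl⟩ hkx
  exact_mod_cast Int.le_floor.2 (by exact_mod_cast hle)

lemma cast_ncard_edgeSet_top {V : Type*} [Fintype V] :
    ((⊤ : SimpleGraph V).edgeSet.ncard : ℝ) = Fintype.card V * (Fintype.card V - 1) / 2 := by
  classical
  rw [ncard_edgeSet_eq_card_edgeFinset, SimpleGraph.card_edgeFinset_top_eq_card_choose_two,
    Nat.cast_choose_two]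

/-- For `n ≥ 5`, the achromatic arboricity of `K_n` is at most the
floor of the maximum over positive integers `x` of `min{n(n−1)/(2x), x(n−x−1)+1}`. -/
theorem achromaticArboricity_le_floor_max_min (n : ℕ) (hn : 5 ≤ n) :
    (achromaticArboricity (⊤ : SimpleGraph (Fin n)) : ℝ) ≤
      (⌊sSup {y : ℝ | ∃ x : ℕ, 0 < x ∧
        y = min ((n * (n - 1) : ℝ) / (2 * x)) ((x : ℝ) * ((n : ℝ) - x - 1) + 1)}⌋ : ℝ) := by
  have : Nonempty (Fin n) := ⟨⟨0, by omega⟩⟩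
  simpa only [cast_ncard_edgeSet_top, Fintype.card_fin, div_div] using
    achromaticArboricity_le_floor_max_min_general (⊤ : SimpleGraph (Fin n))
end

section
/- If q is an odd prime and n = q² + q + 1, then the achromatic arboricity of K_n satisfies A_α(K_n) ≥ ((q+1)/4)·(n+1). -/
/-!
The lines of `PG(2, q)` are, like its points, the nonzero vectors of `K³` up to scaling, where
`K = 𝔽_q`. Identify `K³` with a cubic extension `E` of `K`: then inversion in `E` pairs the lines,
and the line of `1` is fixed. The lines through a point form a two-dimensional subspace `W` of `E`.
If `W` contains `x` and `x⁻¹` with `x ∉ K`, these two span it, and since no nonzero polynomial of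
degree at most two over `K` vanishes at `x²`, expanding `y * y⁻¹ = 1` shows that every `y` with
`y, y⁻¹ ∈ W` is a multiple of `x` or of `x⁻¹`. Hence the intersection point of a line with its
partner determines the pair.

For odd `q`, decompose the `K_{q+1}` on each line into `(q + 1) / 2` spanning double stars (they
replace the Hamiltonian paths, as only connectedness matters) and unite the `i`-th stars of the two
lines of a pair. Each part connects all points of its lines, and counting all edges against these
points shows that every part is a tree. Any two pairs of lines cover two common points: otherwise
the four intersections of a line of one with a line of the other would coincide, and both pairs
would meet in the same point. So the union of two parts contains a cycle. Because of the fixed line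
there are at least `(n + 1) / 2` pairs.
-/

open Configuration Configuration.ProjectivePlane SimpleGraph

section Forests

variable {V κ : Type*} {G H : SimpleGraph V}

theorem ncard_le_ncard_edgeSet_add_one_of_reachable [Finite V] {S : Set V}
    (hS : ∀ u ∈ S, ∀ v ∈ S, G.Reachable u v) : S.ncard ≤ G.edgeSet.ncard + 1 := by
  obtain rfl | ⟨a, ha⟩ := S.eq_empty_or_nonempty
  · simp
  let C := G.connectedComponentMk a
  calc S.ncard ≤ C.supp.ncard :=
        Set.ncard_le_ncard fun u hu ↦ ConnectedComponent.sound (hS u hu a ha)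
    _ ≤ Nat.card C.toSimpleGraph.edgeSet + 1 :=
        C.connected_toSimpleGraph.card_vert_le_card_edgeSet_add_one
    _ ≤ G.edgeSet.ncard + 1 := by
        gcongr
        exact Nat.card_le_card_of_injective C.toSimpleGraph_hom.mapEdgeSet
          (Hom.mapEdgeSet.injective _ Subtype.val_injective)

theorem isAcyclic_of_ncard_edgeSet_add_one_le [Finite V] {S : Set V}
    (hS : ∀ u ∈ S, ∀ v ∈ S, G.Reachable u v) (hcard : G.edgeSet.ncard + 1 ≤ S.ncard) :
    G.IsAcyclic := by
  obtain ⟨F, hFG, hF, hreach⟩ := G.exists_isAcyclic_reachable_eq_le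
  have hle : S.ncard ≤ F.edgeSet.ncard + 1 :=
    ncard_le_ncard_edgeSet_add_one_of_reachable fun u hu v hv ↦ hreach ▸ hS u hu v hv
  have hedge : F.edgeSet = G.edgeSet :=
    Set.eq_of_subset_of_ncard_le (edgeSet_mono hFG) (by lia)
  rwa [← edgeSet_inj.mp hedge]

theorem not_isAcyclic_sup_of_reachable (hGH : Disjoint G H) {u v : V} (huv : u ≠ v)
    (hG : G.Reachable u v) (hH : H.Reachable u v) : ¬ (G ⊔ H).IsAcyclic := by
  intro hac
  obtain ⟨p, hp⟩ := hG.exists_isPath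
  obtain ⟨r, hr⟩ := hH.exists_isPath
  have heq : p.mapLe le_sup_left = r.mapLe le_sup_right :=
    congrArg Subtype.val <| (hac.subsingleton_path u v).elim
      ⟨_, hp.mapLe le_sup_left⟩ ⟨_, hr.mapLe le_sup_right⟩
  have hedges : p.edges = r.edges := by
    simpa only [Walk.edges_mapLe_eq_edges] using congrArg Walk.edges heq
  obtain ⟨e, he⟩ := List.exists_mem_of_ne_nil _
    (Walk.edges_eq_nil.not.mpr (Walk.not_nil_of_ne (p := p) huv))
  exact Set.disjoint_left.mp (disjoint_edgeSet.mpr hGH)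
    (p.edges_subset_edgeSet he) (r.edges_subset_edgeSet (hedges ▸ he))

variable [Fintype κ] {C : EdgeLabeling G κ}

theorem sum_ncard_edgeSet_labelGraph [Finite V] :
    ∑ k, (C.labelGraph k).edgeSet.ncard = G.edgeSet.ncard := by
  rw [← finsum_eq_sum_of_fintype, ← Set.ncard_iUnion_of_finite (fun _ ↦ Set.toFinite _)
    fun k l hkl ↦ disjoint_edgeSet.mpr (EdgeLabeling.pairwise_disjoint_labelGraph hkl),
    ← edgeSet_iSup, C.iSup_labelGraph]

theorem isAcyclic_labelGraph_of_reachable [Finite V] {S : κ → Set V}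
    (hS : ∀ k, ∀ u ∈ S k, ∀ v ∈ S k, (C.labelGraph k).Reachable u v)
    (hcard : G.edgeSet.ncard + Fintype.card κ ≤ ∑ k, (S k).ncard) (k : κ) :
    (C.labelGraph k).IsAcyclic := by
  have hle (j : κ) : (S j).ncard ≤ (C.labelGraph j).edgeSet.ncard + 1 :=
    ncard_le_ncard_edgeSet_add_one_of_reachable (hS j)
  have hsum : ∑ j, ((C.labelGraph j).edgeSet.ncard + 1) ≤ ∑ j, (S j).ncard := by
    simpa [Finset.sum_add_distrib, sum_ncard_edgeSet_labelGraph] using hcard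
  have heq : (S k).ncard = (C.labelGraph k).edgeSet.ncard + 1 :=
    (Finset.sum_eq_sum_iff_of_le fun j _ ↦ hle j).mp
      ((Finset.sum_le_sum fun j _ ↦ hle j).antisymm hsum) k (Finset.mem_univ k)
  exact isAcyclic_of_ncard_edgeSet_add_one_le (hS k) heq.ge

end Forests

section AchromaticArboricity

variable {V W κ : Type*} {G : SimpleGraph V} {H : SimpleGraph W} {k : ℕ}

theorem IsCompleteForestPartition.le_card [Finite V] {P : Fin k → Set (Sym2 V)}
    (hP : IsCompleteForestPartition G k P) : k ≤ Nat.card (Sym2 V) := by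
  choose e he using hP.1
  have hinj : Function.Injective e := fun i j hij ↦ by
    by_contra hne
    exact Set.disjoint_left.mp (hP.2.1 i j hne) (he i) (hij ▸ he j)
  simpa using Nat.card_le_card_of_injective e hinj

theorem IsCompleteForestPartition.le_achromaticArboricity [Finite V] {P : Fin k → Set (Sym2 V)}
    (hP : IsCompleteForestPartition G k P) : k ≤ achromaticArboricity G :=
  le_csSup ⟨Nat.card (Sym2 V), fun _ ⟨_, hP'⟩ ↦ hP'.le_card⟩ ⟨P, hP⟩

theorem card_le_achromaticArboricity [Finite V] [Finite κ] (C : EdgeLabeling G κ)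
    (hacyclic : ∀ i, (C.labelGraph i).IsAcyclic)
    (hreach : ∀ i j, ∃ u v, u ≠ v ∧
      (C.labelGraph i).Reachable u v ∧ (C.labelGraph j).Reachable u v) :
    Nat.card κ ≤ achromaticArboricity G := by
  let e : Fin (Nat.card κ) ≃ κ := (Finite.equivFin κ).symm
  have hdisj {i j : Fin (Nat.card κ)} (hij : i ≠ j) :
      Disjoint (C.labelGraph (e i)) (C.labelGraph (e j)) :=
    EdgeLabeling.pairwise_disjoint_labelGraph (e.injective.ne hij)
  have hP : IsCompleteForestPartition G (Nat.card κ) fun i ↦ (C.labelGraph (e i)).edgeSet := by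
    refine ⟨fun i ↦ ?_, fun i j hij ↦ disjoint_edgeSet.mpr (hdisj hij), ?_,
      fun i ↦ by simpa only [fromEdgeSet_edgeSet] using hacyclic (e i), fun i j hij ↦ ?_⟩
    · obtain ⟨u, v, huv, ⟨p⟩, -⟩ := hreach (e i) (e i)
      obtain ⟨w, hw, -⟩ := Walk.not_nil_iff.mp (Walk.not_nil_of_ne (p := p) huv)
      exact ⟨s(u, w), hw⟩
    · rw [← edgeSet_iSup, e.iSup_comp (g := C.labelGraph), C.iSup_labelGraph]
    · obtain ⟨u, v, huv, hi, hj⟩ := hreach (e i) (e j)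
      simpa only [fromEdgeSet_union, fromEdgeSet_edgeSet] using
        not_isAcyclic_sup_of_reachable (hdisj hij) huv hi hj
  exact hP.le_achromaticArboricity

theorem IsCompleteForestPartition.preimage {P : Fin k → Set (Sym2 W)}
    (hP : IsCompleteForestPartition H k P) (φ : G ≃g H) :
    IsCompleteForestPartition G k fun i ↦ Sym2.map φ ⁻¹' P i := by
  obtain ⟨hne, hdisj, hunion, hac, hcyc⟩ := hP
  have hsurj : Function.Surjective (Sym2.map φ) := fun e ↦ ⟨e.map φ.symm, by simp [Sym2.map_map]⟩
  have hiso (A : Set (Sym2 W)) :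
      (fromEdgeSet (Sym2.map φ ⁻¹' A)).IsAcyclic ↔ (fromEdgeSet A).IsAcyclic :=
    Iso.isAcyclic_iff ⟨φ.toEquiv, by simp⟩
  refine ⟨fun i ↦ (hne i).preimage hsurj, fun i j hij ↦ (hdisj i j hij).preimage _, ?_,
    fun i ↦ (hiso _).mpr (hac i), fun i j hij ↦ ?_⟩
  · rw [← Set.preimage_iUnion, hunion]
    ext e
    induction e with | _ u v => simp [φ.map_adj_iff]
  · rw [← Set.preimage_union, hiso]
    exact hcyc i j hij

theorem achromaticArboricity_congr (φ : G ≃g H) :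
    achromaticArboricity G = achromaticArboricity H :=
  congrArg sSup <| Set.ext fun _ ↦
    ⟨fun ⟨_, hP⟩ ↦ ⟨_, hP.preimage φ.symm⟩, fun ⟨_, hP⟩ ↦ ⟨_, hP.preimage φ⟩⟩

end AchromaticArboricity

section DoubleStars

variable {I V κ : Type*}

/-- The decomposition of the complete graph on `I × Bool` into double stars, one for each `i : I`,
with centres `(i, true)` and `(i, false)`: among the vertices `(j, t)` with `i < j` each centre
takes those on its own side, among those with `j < i` the ones on the other side. -/
def doubleStarLabeling (I : Type*) [LinearOrder I] : TopEdgeLabeling (I × Bool) I :=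
  EdgeLabeling.mk (fun x y _ ↦ if x.2 = y.2 then min x.1 y.1 else max x.1 y.1)
    fun x y _ ↦ by simp only [eq_comm, min_comm, max_comm]

theorem doubleStarLabeling_get [LinearOrder I] {x y : I × Bool} (h : x ≠ y) :
    (doubleStarLabeling I).get x y h = if x.2 = y.2 then min x.1 y.1 else max x.1 y.1 :=
  rfl

theorem preconnected_labelGraph_doubleStarLabeling [LinearOrder I] (i : I) :
    ((doubleStarLabeling I).labelGraph i).Preconnected := by
  have hadj {x y : I × Bool} (hne : x ≠ y) (hxy : (doubleStarLabeling I).get x y hne = i) :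
      ((doubleStarLabeling I).labelGraph i).Reachable x y :=
    ((TopEdgeLabeling.labelGraph_adj x y).mpr ⟨hne, hxy⟩).reachable
  have hcentre (s t : Bool) : ((doubleStarLabeling I).labelGraph i).Reachable (i, s) (i, t) := by
    obtain rfl | hst := eq_or_ne s t
    · rfl
    · exact hadj (by simpa using hst) (by simp [doubleStarLabeling_get, hst])
  have hleaf (x : I × Bool) : ∃ s, ((doubleStarLabeling I).labelGraph i).Reachable x (i, s) := by
    obtain ⟨j, t⟩ := x
    obtain hji | rfl | hij := lt_trichotomy j i
    · exact ⟨!t, hadj (by simp) (by simp [doubleStarLabeling_get, hji.le])⟩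
    · exact ⟨t, Reachable.rfl⟩
    · exact ⟨t, hadj (by simp [hij.ne']) (by simp [doubleStarLabeling_get, hij.le])⟩
  intro x y
  obtain ⟨s, hx⟩ := hleaf x
  obtain ⟨t, hy⟩ := hleaf y
  exact (hx.trans (hcentre s t)).trans hy.symm

theorem preconnected_labelGraph_pullback_equiv {W : Type*} {C : TopEdgeLabeling W κ} {k : κ}
    (hC : (C.labelGraph k).Preconnected) (e : V ≃ W) :
    ((TopEdgeLabeling.pullback C e.toEmbedding).labelGraph k).Preconnected := by
  have φ : (TopEdgeLabeling.pullback C e.toEmbedding).labelGraph k ≃g C.labelGraph k :=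
    ⟨e, by simp only [TopEdgeLabeling.labelGraph_adj, e.injective.ne_iff]; exact Iff.rfl⟩
  exact φ.preconnected_iff.mpr hC

theorem exists_topEdgeLabeling_preconnected [Finite V] {m : ℕ} (hV : Nat.card V = 2 * m) :
    ∃ T : TopEdgeLabeling V (Fin m), ∀ i, (T.labelGraph i).Preconnected := by
  obtain ⟨e⟩ : Nonempty (V ≃ Fin m × Bool) := Finite.card_eq.mp (by simp [hV, mul_comm])
  exact ⟨TopEdgeLabeling.pullback (doubleStarLabeling (Fin m)) e.toEmbedding, fun i ↦
    preconnected_labelGraph_pullback_equiv (preconnected_labelGraph_doubleStarLabeling i) e⟩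

end DoubleStars

section LineLabeling

variable {P L κ ι : Type*} [Membership P L]

/-- The points covered by the lines of class `c`, for a grouping `g` of the lines into classes. -/
def classCover (P : Type*) {L κ : Type*} [Membership P L] (g : L → κ) (c : κ) : Set P :=
  {p | ∃ l, g l = c ∧ p ∈ l}

theorem mkLine_eq [HasLines P L] {u v : P} (h : u ≠ v) {l : L} (hu : u ∈ l) (hv : v ∈ l) :
    HasLines.mkLine h = l :=
  (Nondegenerate.eq_or_eq (HasLines.mkLine_ax h).1 (HasLines.mkLine_ax h).2 hu hv).resolve_left h

theorem get_congr_line {T : ∀ l : L, TopEdgeLabeling {p : P // p ∈ l} ι} {l k : L} (hlk : l = k)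
    {u v : P} (huv : u ≠ v) (hul : u ∈ l) (hvl : v ∈ l) (huk : u ∈ k) (hvk : v ∈ k) :
    (T l).get ⟨u, hul⟩ ⟨v, hvl⟩ (Subtype.coe_ne_coe.mp huv) =
      (T k).get ⟨u, huk⟩ ⟨v, hvk⟩ (Subtype.coe_ne_coe.mp huv) := by
  subst hlk
  rfl

/-- The labelling of the pairs of points obtained by labelling the pairs on each line `l` by `T l`
and recording in addition the class `g l` of the line through the pair. -/
def lineLabeling [HasLines P L] (g : L → κ) (T : ∀ l : L, TopEdgeLabeling {p : P // p ∈ l} ι) :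
    TopEdgeLabeling P (κ × ι) :=
  EdgeLabeling.mk
    (fun u v h ↦ (g (HasLines.mkLine h), (T (HasLines.mkLine h)).get
      ⟨u, (HasLines.mkLine_ax h).1⟩ ⟨v, (HasLines.mkLine_ax h).2⟩ (Subtype.coe_ne_coe.mp h)))
    fun u v h ↦ by
      have heq : HasLines.mkLine h.symm = (HasLines.mkLine h : L) :=
        mkLine_eq _ (HasLines.mkLine_ax h).2 (HasLines.mkLine_ax h).1
      exact Prod.ext (congrArg g heq)
        ((get_congr_line heq h.symm _ _ _ _).trans (EdgeLabeling.get_comm _ _ _))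

variable {g : L → κ} {T : ∀ l : L, TopEdgeLabeling {p : P // p ∈ l} ι} {i : ι}

theorem get_lineLabeling [HasLines P L] {l : L} {u v : {p : P // p ∈ l}} (h : u ≠ v) :
    (lineLabeling g T).get u v (Subtype.coe_ne_coe.mpr h) = (g l, (T l).get u v h) := by
  have heq : HasLines.mkLine (Subtype.coe_ne_coe.mpr h) = l := mkLine_eq _ u.2 v.2
  exact Prod.ext (congrArg g heq)
    (get_congr_line heq (Subtype.coe_ne_coe.mpr h) _ _ u.2 v.2)

theorem reachable_labelGraph_lineLabeling_of_mem [HasLines P L] {l : L}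
    (hT : ((T l).labelGraph i).Preconnected) {u v : P} (hu : u ∈ l) (hv : v ∈ l) :
    ((lineLabeling g T).labelGraph (g l, i)).Reachable u v := by
  let φ : (T l).labelGraph i →g (lineLabeling g T).labelGraph (g l, i) :=
    ⟨Subtype.val, fun {a b} hab ↦ by
      obtain ⟨hne, hi⟩ := (TopEdgeLabeling.labelGraph_adj a b).mp hab
      refine (TopEdgeLabeling.labelGraph_adj _ _).mpr ⟨Subtype.coe_ne_coe.mpr hne, ?_⟩
      rw [get_lineLabeling hne, hi]⟩
  exact (hT ⟨u, hu⟩ ⟨v, hv⟩).map φ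

end LineLabeling

section ProjectivePlane

variable {P L κ ι : Type*} [Membership P L] [ProjectivePlane P L]

variable (P) in
theorem exists_mem_and_mem (l k : L) : ∃ p : P, p ∈ l ∧ p ∈ k := by
  obtain rfl | hlk := eq_or_ne l k
  · obtain ⟨-, -, p, -, l₂, l₃, -, -, -, -, -, -, h₂, h₃⟩ :=
      exists_config (P := P) (L := L)
    have : Nontrivial L := nontrivial_of_ne l₂ l₃ fun h ↦ h₃ (h ▸ h₂)
    obtain ⟨k, hk⟩ := exists_ne l
    exact ⟨HasPoints.mkPoint hk, (HasPoints.mkPoint_ax hk).2, (HasPoints.mkPoint_ax hk).2⟩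
  · exact ⟨HasPoints.mkPoint hlk, HasPoints.mkPoint_ax hlk⟩

theorem reachable_labelGraph_lineLabeling {g : L → κ}
    {T : ∀ l : L, TopEdgeLabeling {p : P // p ∈ l} ι} {i : ι}
    (hT : ∀ l, ((T l).labelGraph i).Preconnected) {c : κ} {u v : P}
    (hu : u ∈ classCover P g c) (hv : v ∈ classCover P g c) :
    ((lineLabeling g T).labelGraph (c, i)).Reachable u v := by
  obtain ⟨l, rfl, hul⟩ := hu
  obtain ⟨k, hkl, hvk⟩ := hv
  obtain ⟨p, hpl, hpk⟩ := exists_mem_and_mem P l k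
  exact (reachable_labelGraph_lineLabeling_of_mem (hT l) hul hpl).trans
    (hkl ▸ reachable_labelGraph_lineLabeling_of_mem (hT k) hpk hvk)

variable (P) in
theorem ncard_line [Finite P] [Finite L] (l : L) : {p : P | p ∈ l}.ncard = order P L + 1 :=
  pointCount_eq P l

variable (P) in
theorem nontrivial_line [Finite P] [Finite L] (l : L) : {p : P | p ∈ l}.Nontrivial := by
  refine Set.one_lt_ncard_iff_nontrivial.mp ?_
  rw [ncard_line]
  exact Nat.lt_add_right 1 (one_lt_order P L)

theorem two_mul_order_add_one_le_ncard_line_union [Finite P] [Finite L] {l k : L} (h : l ≠ k) :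
    2 * order P L + 1 ≤ ({p : P | p ∈ l} ∪ {p | p ∈ k}).ncard := by
  have hinter : ({p : P | p ∈ l} ∩ {p | p ∈ k}).ncard ≤ 1 :=
    Set.ncard_le_one_iff_subsingleton.mpr fun _ ⟨hpl, hpk⟩ _ ⟨hrl, hrk⟩ ↦
      (Nondegenerate.eq_or_eq (L := L) hpl hrl hpk hrk).resolve_right h
  have hunion := Set.ncard_union_add_ncard_inter {p : P | p ∈ l} {p | p ∈ k}
  rw [ncard_line, ncard_line] at hunion
  lia

theorem ncard_edgeSet_top_eq_mul [Finite P] [Finite L] {m : ℕ}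
    (hm : order P L + 1 = 2 * m) :
    (⊤ : SimpleGraph P).edgeSet.ncard = order P L * Nat.card L * m := by
  classical
  cases nonempty_fintype P
  cases nonempty_fintype L
  have hP : Fintype.card P = order P L * (2 * m) + 1 := by
    rw [card_points P L, ← hm]
    ring
  rw [Nat.card_eq_fintype_card, ← card_points_eq_card_lines P L,
    ← coe_edgeFinset, Set.ncard_coe_finset, card_edgeFinset_top_eq_card_choose_two,
    Nat.choose_two_right, hP, Nat.add_sub_cancel]
  refine Nat.div_eq_of_eq_mul_left two_pos ?_
  ring

theorem order_add_one_mul_card_le_two_mul_achromaticArboricity [Finite P] [Finite L]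
    [Fintype κ] (g : L → κ) (hodd : Odd (order P L))
    (hcover : order P L * Nat.card L + Fintype.card κ ≤ ∑ c, (classCover P g c).ncard)
    (hmeet : ∀ c d, (classCover P g c ∩ classCover P g d).Nontrivial) :
    (order P L + 1) * Fintype.card κ ≤ 2 * achromaticArboricity (⊤ : SimpleGraph P) := by
  obtain ⟨m, hm⟩ : ∃ m, order P L + 1 = 2 * m :=
    (hodd.add_odd odd_one).exists_two_nsmul
  choose T hT using fun l : L ↦ exists_topEdgeLabeling_preconnected (V := {p : P // p ∈ l})
    ((pointCount_eq P l).trans hm)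
  have hreach (k : κ × Fin m) : ∀ u ∈ classCover P g k.1, ∀ v ∈ classCover P g k.1,
      ((lineLabeling g T).labelGraph k).Reachable u v :=
    fun _ hu _ hv ↦ reachable_labelGraph_lineLabeling (fun l ↦ hT l k.2) hu hv
  have hcard : (⊤ : SimpleGraph P).edgeSet.ncard + Fintype.card (κ × Fin m) ≤
      ∑ k : κ × Fin m, (classCover P g k.1).ncard := by
    calc (⊤ : SimpleGraph P).edgeSet.ncard + Fintype.card (κ × Fin m)
        = (order P L * Nat.card L + Fintype.card κ) * m := by
          rw [ncard_edgeSet_top_eq_mul hm, Fintype.card_prod, Fintype.card_fin, add_mul]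
      _ ≤ (∑ c, (classCover P g c).ncard) * m := Nat.mul_le_mul_right m hcover
      _ = ∑ k : κ × Fin m, (classCover P g k.1).ncard := by
          simp [Fintype.sum_prod_type, Finset.mul_sum, mul_comm]
  have hκ : Nat.card (κ × Fin m) ≤ achromaticArboricity (⊤ : SimpleGraph P) := by
    refine card_le_achromaticArboricity (lineLabeling g T)
      (isAcyclic_labelGraph_of_reachable hreach hcard) fun k k' ↦ ?_
    obtain ⟨u, ⟨hu, hu'⟩, v, ⟨hv, hv'⟩, huv⟩ := hmeet k.1 k'.1
    exact ⟨u, v, huv, hreach k u hu v hv, hreach k' u hu' v hv'⟩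
  rw [hm, mul_assoc, mul_comm m]
  simpa using Nat.mul_le_mul_left 2 hκ

end ProjectivePlane

section LinePairs

variable {P L : Type*} [Membership P L] {σ : L → L} {l k : L}

/-- The class of a line `l` under an involution `σ` of the lines: the unordered pair `{l, σ l}`. -/
def linePair (σ : L → L) : L → Set.range fun l ↦ s(l, σ l) :=
  Set.rangeFactorization _

theorem linePair_surjective : Function.Surjective (linePair σ) :=
  Set.rangeFactorization_surjective

theorem linePair_eq_iff (hσ : Function.Involutive σ) :
    linePair σ k = linePair σ l ↔ k = l ∨ k = σ l := by
  have : s(k, σ k) = s(l, σ l) ↔ k = l ∨ k = σ l := by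
    rw [Sym2.eq_iff]
    grind [Function.Involutive]
  rw [← this, ← Subtype.coe_inj]
  rfl

theorem classCover_linePair (hσ : Function.Involutive σ) (l : L) :
    classCover P (linePair σ) (linePair σ l) = {p | p ∈ l} ∪ {p | p ∈ σ l} := by
  ext p
  simp [classCover, linePair_eq_iff hσ, or_and_right, exists_or]

theorem filter_linePair_eq_pair [Fintype L] [DecidableEq L] (hσ : Function.Involutive σ) (l : L) :
    ({k | linePair σ k = linePair σ l} : Finset L) = {l, σ l} := by
  ext k
  simp [linePair_eq_iff hσ]

theorem card_lt_two_mul_card_range [Finite L] (hσ : Function.Involutive σ)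
    (hfix : ∃ l, σ l = l) : Nat.card L < 2 * Nat.card (Set.range fun l ↦ s(l, σ l)) := by
  classical
  cases nonempty_fintype L
  obtain ⟨l₀, hl₀⟩ := hfix
  calc Nat.card L = ∑ c, Finset.card {k | linePair σ k = c} := by
        rw [Nat.card_eq_fintype_card]
        exact Finset.card_eq_sum_card_fiberwise fun _ _ ↦ Finset.mem_univ _
    _ < ∑ _c : Set.range fun l ↦ s(l, σ l), 2 := by
        refine Finset.sum_lt_sum (fun c _ ↦ ?_) ⟨linePair σ l₀, Finset.mem_univ _, ?_⟩
        · obtain ⟨l, rfl⟩ := linePair_surjective c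
          rw [filter_linePair_eq_pair hσ]
          exact Finset.card_le_two
        · rw [filter_linePair_eq_pair hσ, hl₀]
          simp
    _ = 2 * Nat.card (Set.range fun l ↦ s(l, σ l)) := by
        simp [mul_comm, Nat.card_eq_fintype_card]

variable [ProjectivePlane P L] [Finite P] [Finite L]

theorem order_mul_card_add_one_le_ncard_classCover [Fintype L] [DecidableEq L]
    (hσ : Function.Involutive σ) (l : L) :
    order P L * Finset.card {k | linePair σ k = linePair σ l} + 1 ≤
      (classCover P (linePair σ) (linePair σ l)).ncard := by
  rw [filter_linePair_eq_pair hσ, classCover_linePair hσ]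
  obtain h | h := eq_or_ne l (σ l)
  · simp [← h, ncard_line]
  · rw [Finset.card_pair h, mul_comm]
    exact two_mul_order_add_one_le_ncard_line_union h

theorem order_mul_card_add_card_le_sum_ncard_classCover [Fintype L] [DecidableEq L]
    (hσ : Function.Involutive σ) :
    order P L * Nat.card L + Fintype.card (Set.range fun l ↦ s(l, σ l)) ≤
      ∑ c, (classCover P (linePair σ) c).ncard := by
  calc _ = ∑ c, (order P L * Finset.card {k | linePair σ k = c} + 1) := by
        rw [Finset.sum_add_distrib, ← Finset.mul_sum, ← Finset.card_eq_sum_card_fiberwise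
          fun _ _ ↦ Finset.mem_univ _]
        simp
    _ ≤ _ := Finset.sum_le_sum fun c _ ↦ by
        obtain ⟨l, rfl⟩ := linePair_surjective c
        exact order_mul_card_add_one_le_ncard_classCover hσ l

/-- A pairing of the lines of `P`: an involution `σ` with a fixed line such that no two pairs
`{l, σ l}` have a common point in both their lines. For a line `l` other than its partner this says
that the intersection point of `l` and `σ l` determines the pair. -/
structure IsLinePairing (P : Type*) {L : Type*} [Membership P L] (σ : L → L) : Prop where
  involutive : Function.Involutive σ
  exists_fixed : ∃ l, σ l = l
  eq_or_eq : ∀ ⦃p : P⦄ ⦃l k : L⦄, p ∈ l → p ∈ σ l → p ∈ k → p ∈ σ k → k = l ∨ k = σ l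

namespace IsLinePairing

theorem nontrivial_classCover_inter_classCover (hσ : IsLinePairing P σ) (l k : L) :
    (classCover P (linePair σ) (linePair σ l) ∩
      classCover P (linePair σ) (linePair σ k)).Nontrivial := by
  by_contra hsub
  rw [Set.not_nontrivial_iff, classCover_linePair hσ.involutive, classCover_linePair hσ.involutive]
    at hsub
  obtain ⟨a, hal, hak⟩ := exists_mem_and_mem P l k
  obtain ⟨b, hbl, hbk⟩ := exists_mem_and_mem P l (σ k)
  obtain ⟨c, hcl, hck⟩ := exists_mem_and_mem P (σ l) k
  obtain rfl : b = a := hsub ⟨.inl hbl, .inr hbk⟩ ⟨.inl hal, .inl hak⟩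
  obtain rfl : c = b := hsub ⟨.inr hcl, .inl hck⟩ ⟨.inl hal, .inl hak⟩
  refine Set.not_subsingleton_iff.mpr (nontrivial_line P l) fun p hp r hr ↦ ?_
  obtain rfl | rfl := hσ.eq_or_eq hal hcl hak hbk
  · exact hsub ⟨.inl hp, .inl hp⟩ ⟨.inl hr, .inl hr⟩
  · exact hsub ⟨.inl hp, .inr (by rwa [hσ.involutive])⟩ ⟨.inl hr, .inr (by rwa [hσ.involutive])⟩

theorem order_add_one_mul_le_achromaticArboricity (hσ : IsLinePairing P σ)
    (hodd : Odd (order P L)) :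
    (order P L + 1) * (Nat.card P + 1) ≤ 4 * achromaticArboricity (⊤ : SimpleGraph P) := by
  classical
  cases nonempty_fintype P
  cases nonempty_fintype L
  have hPL : Nat.card P = Nat.card L := by
    simpa using card_points_eq_card_lines P L
  have hpairs := card_lt_two_mul_card_range hσ.involutive hσ.exists_fixed
  have hbound := order_add_one_mul_card_le_two_mul_achromaticArboricity (linePair σ) hodd
    (order_mul_card_add_card_le_sum_ncard_classCover hσ.involutive) fun c d ↦ by
      obtain ⟨l, rfl⟩ := linePair_surjective c
      obtain ⟨k, rfl⟩ := linePair_surjective d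
      exact hσ.nontrivial_classCover_inter_classCover l k
  rw [← Nat.card_eq_fintype_card] at hbound
  rw [hPL]
  nlinarith

end IsLinePairing

end LinePairs

section PrimeDegreeExtension

open Module

variable {K E : Type*} [Field K] [Field E] [Algebra K E] {x y z : E} {W : Submodule K E}

theorem linearIndependent_pow_of_prime_finrank (hp : (finrank K E).Prime)
    (hx : x ∉ (algebraMap K E).range) :
    LinearIndependent K fun i : Fin (finrank K E) ↦ x ^ (i : ℕ) := by
  have : FiniteDimensional K E := finite_of_finrank_pos hp.pos
  have hdeg : (minpoly K x).natDegree = finrank K E :=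
    ((Nat.dvd_prime hp).mp (minpoly.degree_dvd (Algebra.IsIntegral.isIntegral x))).resolve_left
      (minpoly.natDegree_eq_one_iff.not.mpr hx)
  exact hdeg ▸ linearIndependent_pow x

theorem eq_zero_of_smul_one_add_smul_add_smul_sq_eq_zero (hp : (finrank K E).Prime)
    (h3 : 3 ≤ finrank K E) (hx : x ∉ (algebraMap K E).range) {a b c : K}
    (h : a • (1 : E) + b • x + c • x ^ 2 = 0) : a = 0 ∧ b = 0 ∧ c = 0 := by
  have hli := (linearIndependent_pow_of_prime_finrank hp hx).comp _ (Fin.castLE_injective h3)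
  have hcoeff := Fintype.linearIndependent_iff.mp hli ![a, b, c]
    (by simpa [Fin.sum_univ_three] using h)
  exact ⟨hcoeff 0, hcoeff 1, hcoeff 2⟩

theorem sq_notMem_range_algebraMap (hp : (finrank K E).Prime) (h3 : 3 ≤ finrank K E)
    (hx : x ∉ (algebraMap K E).range) : x ^ 2 ∉ (algebraMap K E).range := by
  rintro ⟨c, hc⟩
  have h : (-c) • (1 : E) + (0 : K) • x + (1 : K) • x ^ 2 = 0 := by
    simp [← hc, Algebra.algebraMap_eq_smul_one]
  exact one_ne_zero (eq_zero_of_smul_one_add_smul_add_smul_sq_eq_zero hp h3 hx h).2.2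

theorem exists_smul_inv_add_smul_eq (hp : (finrank K E).Prime) (h3 : 3 ≤ finrank K E)
    (hW : finrank K W ≤ 2) (hx : x ∉ (algebraMap K E).range) (hxW : x ∈ W) (hxW' : x⁻¹ ∈ W)
    (hzW : z ∈ W) : ∃ a b : K, a • x⁻¹ + b • x = z := by
  have : FiniteDimensional K E := finite_of_finrank_pos hp.pos
  have hx0 : x ≠ 0 := fun h ↦ hx (h ▸ zero_mem _)
  have hli : LinearIndependent K ![x⁻¹, x] := by
    refine LinearIndependent.pair_iff.mpr fun a b hab ↦ ?_
    have h : a • (1 : E) + (0 : K) • x + b • x ^ 2 = 0 := by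
      simpa [mul_add, hx0, sq] using congrArg (x * ·) hab
    have := eq_zero_of_smul_one_add_smul_add_smul_sq_eq_zero hp h3 hx h
    exact ⟨this.1, this.2.2⟩
  have hspan : Submodule.span K {x⁻¹, x} = W := by
    refine Submodule.eq_of_le_of_finrank_le (Submodule.span_le.mpr (Set.pair_subset hxW' hxW)) ?_
    rw [← Matrix.range_cons_cons_empty x⁻¹ x ![], finrank_span_eq_card hli]
    exact hW
  exact Submodule.mem_span_pair.mp (hspan ▸ hzW)

theorem exists_smul_eq_or_exists_smul_inv_eq_of_notMem_range (hp : (finrank K E).Prime)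
    (h3 : 3 ≤ finrank K E) (hW : finrank K W ≤ 2) (hx : x ∉ (algebraMap K E).range)
    (hxW : x ∈ W) (hxW' : x⁻¹ ∈ W) (hy0 : y ≠ 0) (hyW : y ∈ W) (hyW' : y⁻¹ ∈ W) :
    (∃ c : K, c • x = y) ∨ ∃ c : K, c • x⁻¹ = y := by
  have hx0 : x ≠ 0 := fun h ↦ hx (h ▸ zero_mem _)
  obtain ⟨a, b, hy⟩ := exists_smul_inv_add_smul_eq hp h3 hW hx hxW hxW' hyW
  obtain ⟨d, c, hy'⟩ := exists_smul_inv_add_smul_eq hp h3 hW hx hxW hxW' hyW'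
  have hprod : (a • x⁻¹ + b • x) * (d • x⁻¹ + c • x) = 1 := by
    rw [hy, hy', mul_inv_cancel₀ hy0]
  have hquad : (a * d) • (1 : E) + (a * c + b * d - 1) • x ^ 2 + (b * c) • (x ^ 2) ^ 2 = 0 := by
    have hpoly : (algebraMap K E a + x ^ 2 * algebraMap K E b) *
        (algebraMap K E d + x ^ 2 * algebraMap K E c) = x ^ 2 := by
      simp only [Algebra.smul_def] at hprod
      field_simp at hprod
      exact hprod
    simp only [Algebra.smul_def, map_mul, map_add, map_sub, map_one]
    linear_combination hpoly
  obtain ⟨had, hmid, hbc⟩ := eq_zero_of_smul_one_add_smul_add_smul_sq_eq_zero hp h3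
    (sq_notMem_range_algebraMap hp h3 hx) hquad
  obtain rfl | hb := eq_or_ne b 0
  · exact .inr ⟨a, by simpa using hy⟩
  · obtain rfl : c = 0 := by simpa [hb] using hbc
    obtain rfl : a = 0 := by
      by_contra ha
      simp_all
    exact .inl ⟨b, by simpa using hy⟩

theorem exists_smul_eq_or_exists_smul_inv_eq (hp : (finrank K E).Prime) (h3 : 3 ≤ finrank K E)
    (hW : finrank K W ≤ 2) (hx0 : x ≠ 0) (hxW : x ∈ W) (hxW' : x⁻¹ ∈ W)
    (hy0 : y ≠ 0) (hyW : y ∈ W) (hyW' : y⁻¹ ∈ W) :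
    (∃ c : K, c • x = y) ∨ ∃ c : K, c • x⁻¹ = y := by
  by_cases hx : x ∈ (algebraMap K E).range
  · by_cases hy : y ∈ (algebraMap K E).range
    · obtain ⟨a, rfl⟩ := hx
      obtain ⟨b, rfl⟩ := hy
      refine .inl ⟨b / a, ?_⟩
      rw [Algebra.smul_def, ← map_mul, div_mul_cancel₀ b (by simpa using hx0)]
    · obtain ⟨c, rfl⟩ | ⟨c, rfl⟩ := exists_smul_eq_or_exists_smul_inv_eq_of_notMem_range
        hp h3 hW hy hyW hyW' hx0 hxW hxW'
      · exact .inl ⟨c⁻¹, inv_smul_smul₀ (left_ne_zero_of_smul hx0) y⟩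
      · refine .inr ⟨c, ?_⟩
        rw [smul_inv₀, inv_inv, smul_inv_smul₀ (left_ne_zero_of_smul hx0)]
  · exact exists_smul_eq_or_exists_smul_inv_eq_of_notMem_range hp h3 hW hx hxW hxW' hy0 hyW hyW'

end PrimeDegreeExtension

section ProjectiveInversion

open Module
open scoped LinearAlgebra.Projectivization

variable {K E V : Type*} [Field K] [Field E] [Algebra K E] [AddCommGroup V] [Module K V]

/-- Inversion of a field extension `E` of `K`, read through a linear isomorphism `ε` as a map of
the points of the projective space of `V`. -/
def projectiveInv (ε : V ≃ₗ[K] E) : ℙ K V → ℙ K V :=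
  Projectivization.lift
    (fun v ↦ .mk K (ε.symm (ε v)⁻¹) (by simpa using v.2))
    (by
      rintro ⟨v, hv⟩ ⟨w, hw⟩ t rfl
      exact (Projectivization.mk_eq_mk_iff' ..).mpr ⟨t⁻¹, by simp [smul_inv₀]⟩)

theorem projectiveInv_mk (ε : V ≃ₗ[K] E) {v : V} (hv : v ≠ 0) :
    projectiveInv ε (.mk K v hv) = .mk K (ε.symm (ε v)⁻¹) (by simpa using hv) :=
  rfl

theorem projectiveInv_involutive (ε : V ≃ₗ[K] E) : Function.Involutive (projectiveInv ε) := by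
  intro l
  induction l with | _ v hv
  simp [projectiveInv_mk]

theorem projectiveInv_mk_symm_one (ε : V ≃ₗ[K] E) :
    projectiveInv ε (.mk K (ε.symm 1) (by simp)) = .mk K (ε.symm 1) (by simp) := by
  simp [projectiveInv_mk]

theorem exists_submodule_finrank_eq_two_mem_iff_dotProduct (ε : (Fin 3 → K) ≃ₗ[K] E)
    {w : Fin 3 → K} (hw : w ≠ 0) :
    ∃ W : Submodule K E, finrank K W = 2 ∧ ∀ v, ε v ∈ W ↔ w ⬝ᵥ v = 0 := by
  have hE : finrank K E = 3 := by simp [← ε.finrank_eq]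
  have : FiniteDimensional K E := finite_of_finrank_pos (by simp [hE])
  let f : Dual K E := dotProductBilin K K w ∘ₗ ε.symm.toLinearMap
  have hf : f ≠ 0 := fun h ↦ hw <| dotProduct_eq_zero_iff.mp fun v ↦ by
    simpa [f] using LinearMap.congr_fun h (ε v)
  have hker : finrank K (LinearMap.ker f) + 1 = 3 := hE ▸ Dual.finrank_ker_add_one_of_ne_zero hf
  exact ⟨LinearMap.ker f, Nat.succ_injective hker, fun v ↦ by simp [f]⟩

theorem isLinePairing_projectiveInv (ε : (Fin 3 → K) ≃ₗ[K] E) :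
    IsLinePairing (ℙ K (Fin 3 → K)) (projectiveInv ε) := by
  refine ⟨projectiveInv_involutive ε, ⟨_, projectiveInv_mk_symm_one ε⟩,
    fun p l k hl hl' hk hk' ↦ ?_⟩
  induction p with | _ w hw
  induction l with | _ v hv
  induction k with | _ u hu
  simp only [projectiveInv_mk, Configuration.ofField.mem_iff,
    Projectivization.orthogonal_mk] at hl hl' hk hk'
  have hE : finrank K E = 3 := by simp [← ε.finrank_eq]
  obtain ⟨W, hW, hmem⟩ := exists_submodule_finrank_eq_two_mem_iff_dotProduct ε hw
  rw [← hmem] at hl hl' hk hk'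
  rw [ε.apply_symm_apply] at hl' hk'
  simp only [projectiveInv_mk, Projectivization.mk_eq_mk_iff']
  obtain ⟨c, hc⟩ | ⟨c, hc⟩ := exists_smul_eq_or_exists_smul_inv_eq
    (hE ▸ Nat.prime_three) hE.ge hW.le (ε.map_ne_zero_iff.mpr hv) hl hl'
    (ε.map_ne_zero_iff.mpr hu) hk hk'
  · exact .inl ⟨c, ε.injective (by rw [map_smul, hc])⟩
  · exact .inr ⟨c, ε.injective (by rw [map_smul, ε.apply_symm_apply, hc])⟩

end ProjectiveInversion

section FiniteFields

open scoped LinearAlgebra.Projectivization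

variable {K E : Type*} [Field K] [Finite K] [Field E] [Algebra K E]

variable (K) in
theorem natCard_projectivization_fin_three :
    Nat.card (ℙ K (Fin 3 → K)) = Nat.card K ^ 2 + Nat.card K + 1 := by
  rw [Projectivization.card_of_finrank K (Fin 3 → K) (n := 3) (by simp)]
  simp only [Finset.sum_range_succ, Finset.sum_range_zero, pow_zero, pow_one]
  ring

variable (K) in
theorem order_projectivization_fin_three [DecidableEq K] :
    order (ℙ K (Fin 3 → K)) (ℙ K (Fin 3 → K)) = Nat.card K := by
  cases nonempty_fintype (ℙ K (Fin 3 → K))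
  have h := natCard_projectivization_fin_three K
  rw [Nat.card_eq_fintype_card, card_points (ℙ K (Fin 3 → K)) (ℙ K (Fin 3 → K))] at h
  nlinarith

theorem natCard_add_one_mul_le_achromaticArboricity (hodd : Odd (Nat.card K))
    (ε : (Fin 3 → K) ≃ₗ[K] E) :
    (Nat.card K + 1) * (Nat.card (ℙ K (Fin 3 → K)) + 1) ≤
      4 * achromaticArboricity (⊤ : SimpleGraph (ℙ K (Fin 3 → K))) := by
  classical
  rw [← order_projectivization_fin_three K] at hodd ⊢
  exact (isLinePairing_projectiveInv ε).order_add_one_mul_le_achromaticArboricity hodd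

theorem achromaticArboricity_lower_bound_projective_general (q n : ℕ)
    (hq : IsPrimePow q) (hodd : Odd q) (hn : n = q ^ 2 + q + 1) :
    ((q : ℝ) + 1) / 4 * ((n : ℝ) + 1) ≤
      (achromaticArboricity (⊤ : SimpleGraph (Fin n)) : ℝ) := by
  obtain ⟨p, k, hp, hk, rfl⟩ := (isPrimePow_nat_iff q).mp hq
  have : Fact p.Prime := ⟨hp⟩
  let K := GaloisField p k
  have hK : Nat.card K = p ^ k := GaloisField.card p k hk.ne'
  have ε : (Fin 3 → K) ≃ₗ[K] FiniteField.Extension K p 3 :=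
    LinearEquiv.ofFinrankEq _ _ (by simp [FiniteField.finrank_extension])
  have hcard : Nat.card (ℙ K (Fin 3 → K)) = n := by
    rw [natCard_projectivization_fin_three, hK, hn]
  have hle := natCard_add_one_mul_le_achromaticArboricity (hK ▸ hodd) ε
  rw [achromaticArboricity_congr (Iso.completeGraph (Finite.equivFinOfCardEq hcard)), hcard,
    hK] at hle
  have hreal : ((p ^ k : ℕ) + 1 : ℝ) * (n + 1) ≤
      4 * achromaticArboricity (⊤ : SimpleGraph (Fin n)) := mod_cast hle
  linarith

end FiniteFields

/-- If `q` is an odd prime and `n = q² + q + 1`, then the achromatic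
arboricity of `K_n` is at least `((q+1)/4)(n+1)`. -/
theorem achromaticArboricity_lower_bound_projective (q n : ℕ)
    (hq : q.Prime) (hodd : Odd q) (hn : n = q ^ 2 + q + 1) :
    ((q : ℝ) + 1) / 4 * ((n : ℝ) + 1) ≤
      (achromaticArboricity (⊤ : SimpleGraph (Fin n)) : ℝ) :=
  achromaticArboricity_lower_bound_projective_general q n hq.isPrimePow hodd hn
end

section
/- In the algebraic projective plane PG(2,q) with q an odd prime, the set of n = q²+q+1 lines can be partitioned into one singleton {L_0} and (q²+q)/2 pairs {l, m}, such that each pair of lines intersects in a point, and the intersection points assigned to distinct pairs are pairwise distinct. -/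
variable (q : ℕ) [Fact (Nat.Prime q)]

/-- Points (and, by duality, lines) of the algebraic projective plane `PG(2,q)`,
given by homogeneous coordinates over `ℤ_q`. -/
abbrev PGElem := Projectivization (ZMod q) (Fin 3 → ZMod q)

/-- Incidence in `PG(2,q)`: a point lies on a line iff their homogeneous
coordinates are orthogonal. -/
def pgIncident (p l : PGElem q) : Prop := ∑ i, p.rep i * l.rep i = 0

/-!
Identify the three-dimensional space of line coordinates over a finite field `F` with the cubic
extension `K` of `F`. Inversion in `K` then induces an involution on the set of lines. Since
`[K : F]` is odd, `y ∈ F` whenever `y ^ 2 ∈ F`, so the only fixed line is the class of `1`, and the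
other lines fall into pairs `{y, y⁻¹}`. If the pairs of `y` and `z` meet in the same point `p`, then
`z` and `z⁻¹` lie in the plane of lines through `p`, which is spanned by `y` and `y⁻¹`; hence
`z = a y + b y⁻¹` and `z⁻¹ = c y + d y⁻¹` for some `a b c d : F`. Multiplying gives
`a c y ^ 4 + (a d + b c - 1) y ^ 2 + b d = 0`, and since `y ^ 2` has degree at least three over `F`,
all three coefficients vanish, which leaves only `z = a y` or `z = b y⁻¹`.
-/

open Module Projectivization Function
open scoped LinearAlgebra.Projectivization

section OddDegree

variable {F K : Type*} [Field F] [Field K] [Algebra F K] {y z : K}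

lemma three_le_natDegree_minpoly (hodd : Odd (finrank F K)) (hy : y ∉ (algebraMap F K).range) :
    3 ≤ (minpoly F y).natDegree := by
  have : FiniteDimensional F K := .of_finrank_pos hodd.pos
  obtain ⟨k, hk⟩ := hodd.of_dvd_nat (minpoly.degree_dvd (IsIntegral.of_finite F y))
  have hne : (minpoly F y).natDegree ≠ 1 := mt minpoly.natDegree_eq_one_iff.1 hy
  lia

lemma quadratic_coeffs_eq_zero (hodd : Odd (finrank F K)) (hy : y ∉ (algebraMap F K).range)
    {a b c : F} (h : a • 1 + b • y + c • y ^ 2 = 0) : a = 0 ∧ b = 0 ∧ c = 0 := by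
  have hli : LinearIndependent F fun i : Fin 3 ↦ y ^ (i : ℕ) :=
    (linearIndependent_pow y).comp (Fin.castLE (three_le_natDegree_minpoly hodd hy))
      (Fin.castLE_injective _)
  have hsum : ∑ i : Fin 3, ![a, b, c] i • y ^ (i : ℕ) = 0 := by
    simpa [Fin.sum_univ_three] using h
  have hcoeff := Fintype.linearIndependent_iff.1 hli _ hsum
  exact ⟨hcoeff 0, hcoeff 1, hcoeff 2⟩

lemma mem_range_algebraMap_of_sq_mem (hodd : Odd (finrank F K))
    (h : y ^ 2 ∈ (algebraMap F K).range) : y ∈ (algebraMap F K).range := by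
  by_contra hy
  obtain ⟨c, hc⟩ := h
  have hquad : (-c) • 1 + (0 : F) • y + (1 : F) • y ^ 2 = 0 := by simp [← hc, Algebra.smul_def]
  exact one_ne_zero (quadratic_coeffs_eq_zero hodd hy hquad).2.2

lemma mem_span_self_or_mem_span_inv (hodd : Odd (finrank F K)) (hy : y ∉ (algebraMap F K).range)
    (hz : z ≠ 0) (hmem : z ∈ Submodule.span F {y, y⁻¹})
    (hmem_inv : z⁻¹ ∈ Submodule.span F {y, y⁻¹}) :
    z ∈ Submodule.span F {y} ∨ z ∈ Submodule.span F {y⁻¹} := by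
  have hy0 : y ≠ 0 := by rintro rfl; exact hy (zero_mem _)
  obtain ⟨a, b, hab⟩ := Submodule.mem_span_pair.1 hmem
  obtain ⟨c, d, hcd⟩ := Submodule.mem_span_pair.1 hmem_inv
  have hmul : (a • y + b • y⁻¹) * (c • y + d • y⁻¹) = 1 := by rw [hab, hcd, mul_inv_cancel₀ hz]
  have hquad : (b * d) • 1 + (a * d + b * c - 1) • y ^ 2 + (a * c) • (y ^ 2) ^ 2 = 0 := by
    simp only [Algebra.smul_def, map_mul, map_add, map_sub, map_one] at hmul ⊢
    field_simp at hmul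
    linear_combination hmul
  obtain ⟨hbd, hmid, hac⟩ :=
    quadratic_coeffs_eq_zero hodd (mt (mem_range_algebraMap_of_sq_mem hodd) hy) hquad
  simp only [Submodule.mem_span_singleton, ← hab]
  rcases eq_or_ne a 0 with rfl | ha
  · exact .inr ⟨b, by simp⟩
  rcases eq_or_ne b 0 with rfl | hb
  · exact .inl ⟨a, by simp⟩
  have hc : c = 0 := (mul_eq_zero.1 hac).resolve_left ha
  have hd : d = 0 := (mul_eq_zero.1 hbd).resolve_left hb
  simp [hc, hd] at hmid

end OddDegree

lemma submodule_sup_submodule_eq_ker {F V : Type*} [Field F] [AddCommGroup V] [Module F V]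
    (hV : finrank F V = 3) {φ : Dual F V} (hφ : φ ≠ 0) {l m : ℙ F V} (hlm : l ≠ m)
    (hl : l.submodule ≤ LinearMap.ker φ) (hm : m.submodule ≤ LinearMap.ker φ) :
    l.submodule ⊔ m.submodule = LinearMap.ker φ := by
  have : FiniteDimensional F V := .of_finrank_pos (by lia)
  have hlt : m.submodule < l.submodule ⊔ m.submodule := by
    refine right_lt_sup.2 fun hle ↦ hlm (submodule_injective ?_)
    exact Submodule.eq_of_le_of_finrank_eq hle (by simp only [finrank_submodule])
  have htwo : 1 < finrank F ↥(l.submodule ⊔ m.submodule) := by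
    simpa only [finrank_submodule] using Submodule.finrank_lt_finrank_of_lt hlt
  have hker := Dual.finrank_ker_add_one_of_ne_zero hφ
  exact Submodule.eq_of_le_of_finrank_le (sup_le hl hm) (by lia)

section ProjectiveInversion

variable {F K V : Type*} [Field F] [Field K] [Algebra F K] [AddCommGroup V] [Module F V]

/-- The involution of the projective space `ℙ F V` induced by inversion in a field extension `K`
of `F`, where `e` identifies `V` with `K`. -/
def projInv (e : V ≃ₗ[F] K) : ℙ F V → ℙ F V :=
  Projectivization.lift
    (fun v ↦ mk F (e.symm (e v)⁻¹) (by simpa using v.2)) (by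
      rintro ⟨v, hv⟩ ⟨w, hw⟩ c rfl
      exact (mk_eq_mk_iff' ..).2 ⟨c⁻¹, by simp only [map_smul, smul_inv₀]⟩)

variable (e : V ≃ₗ[F] K)

lemma projInv_mk {v : V} (hv : v ≠ 0) :
    projInv e (mk F v hv) = mk F (e.symm (e v)⁻¹) (by simpa using hv) := rfl

lemma projInv_involutive : Involutive (projInv e) := by
  intro l
  induction l with | h v hv => simp [projInv_mk]

lemma mk_eq_mk_symm_one_iff {v : V} (hv : v ≠ 0) :
    mk F v hv = mk F (e.symm 1) (by simp) ↔ e v ∈ (algebraMap F K).range := by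
  simp [mk_eq_mk_iff', ← map_smul, LinearEquiv.symm_apply_eq, Algebra.smul_def]

lemma projInv_eq_self_iff (hodd : Odd (finrank F K)) {l : ℙ F V} :
    projInv e l = l ↔ l = mk F (e.symm 1) (by simp) := by
  refine ⟨fun h ↦ ?_, fun h ↦ by simp [h, projInv_mk]⟩
  induction l with | h v hv =>
  have hev : e v ≠ 0 := by simpa using hv
  obtain ⟨c, hc⟩ := (mk_eq_mk_iff' ..).1 h.symm
  have hc' : c • (e v)⁻¹ = e v := by simpa using congrArg e hc
  have hsq : algebraMap F K c = e v ^ 2 := by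
    rw [Algebra.smul_def, ← div_eq_mul_inv, div_eq_iff hev] at hc'
    rw [hc', sq]
  exact (mk_eq_mk_symm_one_iff e hv).2 (mem_range_algebraMap_of_sq_mem hodd ⟨c, hsq⟩)

lemma eq_or_eq_projInv_of_submodule_le_sup (hodd : Odd (finrank F K)) {l m : ℙ F V}
    (hl : projInv e l ≠ l) (hm : m.submodule ≤ l.submodule ⊔ (projInv e l).submodule)
    (hm_inv : (projInv e m).submodule ≤ l.submodule ⊔ (projInv e l).submodule) :
    m = l ∨ m = projInv e l := by
  induction l with | h v hv =>
  induction m with | h w hw =>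
  have hev : e v ∉ (algebraMap F K).range := by
    rwa [← mk_eq_mk_symm_one_iff e hv, ← projInv_eq_self_iff e hodd]
  have hmap {x : V} (hx : x ∈ Submodule.span F {v, e.symm (e v)⁻¹}) :
      e x ∈ Submodule.span F {e v, (e v)⁻¹} := by
    simpa [Submodule.map_span, Set.image_pair] using
      Submodule.mem_map_of_mem (f := e.toLinearMap) hx
  simp only [projInv_mk, submodule_mk, ← Submodule.span_insert,
    Submodule.span_singleton_le_iff_mem] at hm hm_inv
  have := mem_span_self_or_mem_span_inv hodd hev (by simpa using hw) (hmap hm)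
    (by simpa using hmap hm_inv)
  simpa [projInv_mk, mk_eq_mk_iff', Submodule.mem_span_singleton, ← map_smul,
    LinearEquiv.eq_symm_apply, LinearEquiv.symm_apply_eq] using this

end ProjectiveInversion

section InvolutionPairs

variable {α : Type*} [Fintype α] [LinearOrder α] {σ : α → α}

/-- The two-element orbits of an involution `σ`, each encoded as its increasing pair `(x, σ x)`. -/
def increasingPairs (σ : α → α) : Finset (α × α) := {p | p.1 < p.2 ∧ σ p.1 = p.2}

lemma mem_increasingPairs {p : α × α} : p ∈ increasingPairs σ ↔ p.1 < p.2 ∧ σ p.1 = p.2 := by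
  simp [increasingPairs]

lemma apply_snd_of_mem_increasingPairs (hσ : Involutive σ) {p : α × α}
    (hp : p ∈ increasingPairs σ) : σ p.2 = p.1 := by
  rw [← (mem_increasingPairs.1 hp).2, hσ]

lemma apply_fst_ne_of_mem_increasingPairs {p : α × α} (hp : p ∈ increasingPairs σ) :
    σ p.1 ≠ p.1 := by
  obtain ⟨hlt, heq⟩ := mem_increasingPairs.1 hp
  exact heq ▸ hlt.ne'

lemma apply_snd_ne_of_mem_increasingPairs (hσ : Involutive σ) {p : α × α}
    (hp : p ∈ increasingPairs σ) : σ p.2 ≠ p.2 := by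
  rw [apply_snd_of_mem_increasingPairs hσ hp]
  exact (mem_increasingPairs.1 hp).1.ne

lemma existsUnique_mem_increasingPairs (hσ : Involutive σ) {x : α} (hx : σ x ≠ x) :
    ∃! p, p ∈ increasingPairs σ ∧ (x = p.1 ∨ x = p.2) := by
  rcases hx.lt_or_gt with h | h
  · exact ⟨(σ x, x), by grind [mem_increasingPairs, Involutive],
      by grind [mem_increasingPairs, Involutive]⟩
  · exact ⟨(x, σ x), by grind [mem_increasingPairs], by grind [mem_increasingPairs, Involutive]⟩

lemma two_mul_card_increasingPairs (hσ : Involutive σ) :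
    2 * (increasingPairs σ).card = Finset.card {x | σ x ≠ x} := by
  have hfst : (increasingPairs σ).card = Finset.card {x | x < σ x} := by
    apply Finset.card_nbij' Prod.fst (fun x ↦ (x, σ x)) <;>
      grind [Set.MapsTo, Set.LeftInvOn, mem_increasingPairs]
  have hsnd : (increasingPairs σ).card = Finset.card {x | σ x < x} := by
    apply Finset.card_nbij' Prod.snd (fun x ↦ (σ x, x)) <;>
      grind [Set.MapsTo, Set.LeftInvOn, mem_increasingPairs, Involutive]
  calc 2 * (increasingPairs σ).card
      = Finset.card {x | x < σ x} + Finset.card {x | σ x < x} := by rw [two_mul, ← hfst, ← hsnd]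
    _ = Finset.card {x | x < σ x ∨ σ x < x} := by
      rw [Finset.filter_or,
        Finset.card_union_of_disjoint (Finset.disjoint_filter.2 fun _ _ ↦ lt_asymm)]
    _ = Finset.card {x | σ x ≠ x} := by simp only [lt_or_lt_iff_ne, ne_comm]

lemma two_mul_card_increasingPairs_add_one (hσ : Involutive σ) {a : α}
    (ha : ∀ x, σ x = x ↔ x = a) : 2 * (increasingPairs σ).card + 1 = Nat.card α := by
  rw [two_mul_card_increasingPairs hσ, Nat.card_eq_fintype_card, ← Finset.card_univ,
    ← Finset.card_erase_add_one (Finset.mem_univ a)]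
  simp only [ne_eq, ha, Finset.filter_ne']

end InvolutionPairs

section Plane

variable {F : Type*} [Field F]

lemma orthogonal_iff_submodule_le_ker {n : Type*} [Fintype n] [DecidableEq n] {v : n → F}
    (hv : v ≠ 0) (l : ℙ F (n → F)) :
    orthogonal (mk F v hv) l ↔ l.submodule ≤ LinearMap.ker (dotProductEquiv F n v) := by
  induction l with | h w hw =>
  simp [orthogonal_mk, submodule_mk, Submodule.span_singleton_le_iff_mem]

variable {K : Type*} [Field K] [Algebra F K]

lemma odd_finrank_of_linearEquiv_fin_three (e : (Fin 3 → F) ≃ₗ[F] K) : Odd (finrank F K) := by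
  simp [← e.finrank_eq, Nat.odd_iff]

variable (e : (Fin 3 → F) ≃ₗ[F] K)

lemma eq_or_eq_projInv_of_orthogonal {p l m : ℙ F (Fin 3 → F)} (hl : projInv e l ≠ l)
    (hpl : orthogonal p l) (hpl_inv : orthogonal p (projInv e l)) (hpm : orthogonal p m)
    (hpm_inv : orthogonal p (projInv e m)) : m = l ∨ m = projInv e l := by
  induction p with | h v hv =>
  rw [orthogonal_iff_submodule_le_ker] at hpl hpl_inv hpm hpm_inv
  have hsup := submodule_sup_submodule_eq_ker (by simp) (by simpa using hv) hl.symm hpl hpl_inv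
  rw [← hsup] at hpm hpm_inv
  exact eq_or_eq_projInv_of_submodule_le_sup e (odd_finrank_of_linearEquiv_fin_three e) hl hpm
    hpm_inv

lemma eq_or_eq_projInv_of_cross_eq_cross [DecidableEq F] {l m : ℙ F (Fin 3 → F)}
    (hl : projInv e l ≠ l) (hm : projInv e m ≠ m)
    (h : cross l (projInv e l) = cross m (projInv e m)) : m = l ∨ m = projInv e l :=
  eq_or_eq_projInv_of_orthogonal e hl (cross_orthogonal_left hl.symm)
    (cross_orthogonal_right hl.symm) (h ▸ cross_orthogonal_left hm.symm)
    (h ▸ cross_orthogonal_right hm.symm)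

lemma eq_of_cross_eq_cross_of_mem_increasingPairs [DecidableEq F] [Fintype (ℙ F (Fin 3 → F))]
    [LinearOrder (ℙ F (Fin 3 → F))] {p p' : ℙ F (Fin 3 → F) × ℙ F (Fin 3 → F)}
    (hp : p ∈ increasingPairs (projInv e)) (hp' : p' ∈ increasingPairs (projInv e))
    (h : cross p.1 p.2 = cross p'.1 p'.2) : p = p' := by
  have hmoved := apply_fst_ne_of_mem_increasingPairs hp
  have hmoved' := apply_fst_ne_of_mem_increasingPairs hp'
  have hfst := (mem_increasingPairs.1 hp).2
  have hfst' := (mem_increasingPairs.1 hp').2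
  have hmem : p'.1 = p.1 ∨ p'.1 = p.2 := by
    simpa only [hfst] using
      eq_or_eq_projInv_of_cross_eq_cross e hmoved hmoved' (by rwa [hfst, hfst'])
  exact (existsUnique_mem_increasingPairs (projInv_involutive e) hmoved').unique
    ⟨hp, hmem⟩ ⟨hp', .inl rfl⟩

lemma card_projectivePlane [Finite F] :
    Nat.card (ℙ F (Fin 3 → F)) = Nat.card F ^ 2 + Nat.card F + 1 := by
  rw [card_of_finrank F (Fin 3 → F) (finrank_fin_fun F)]
  simp only [Finset.sum_range_succ, Finset.sum_range_zero]
  ring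

end Plane

lemma exists_linearEquiv_field (F V : Type*) [Field F] [Finite F] [AddCommGroup V] [Module F V]
    [FiniteDimensional F V] [Nontrivial V] :
    ∃ (K : Type) (_ : Field K) (_ : Algebra F K), Nonempty (V ≃ₗ[F] K) := by
  obtain ⟨p, _⟩ := CharP.exists F
  have : Fact p.Prime := ⟨CharP.char_is_prime F p⟩
  have : NeZero (finrank F V) := ⟨finrank_pos.ne'⟩
  have hK := FiniteField.finrank_extension F p (finrank F V)
  exact ⟨FiniteField.Extension F p (finrank F V), inferInstance, inferInstance,
    ⟨LinearEquiv.ofFinrankEq _ _ hK.symm⟩⟩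

theorem pg_lines_pairing_general (F : Type*) [Field F] [Finite F] :
    ∃ (L₀ : ℙ F (Fin 3 → F)) (pairs : Finset (ℙ F (Fin 3 → F) × ℙ F (Fin 3 → F)))
      (pt : ℙ F (Fin 3 → F) × ℙ F (Fin 3 → F) → ℙ F (Fin 3 → F)),
      pairs.card = (Nat.card F ^ 2 + Nat.card F) / 2 ∧
      (∀ p ∈ pairs, p.1 ≠ p.2 ∧ p.1 ≠ L₀ ∧ p.2 ≠ L₀ ∧
        orthogonal (pt p) p.1 ∧ orthogonal (pt p) p.2) ∧
      (∀ l : ℙ F (Fin 3 → F), l ≠ L₀ → ∃! p, p ∈ pairs ∧ (l = p.1 ∨ l = p.2)) ∧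
      (∀ p ∈ pairs, ∀ p' ∈ pairs, pt p = pt p' → p = p') := by
  classical
  obtain ⟨K, _, _, ⟨e⟩⟩ := exists_linearEquiv_field F (Fin 3 → F)
  have := Fintype.ofFinite (ℙ F (Fin 3 → F))
  let := linearOrderOfSTO (WellOrderingRel (α := ℙ F (Fin 3 → F)))
  have hσ := projInv_involutive e
  have hfix (l) := projInv_eq_self_iff e (odd_finrank_of_linearEquiv_fin_three e) (l := l)
  refine ⟨mk F (e.symm 1) (by simp), increasingPairs (projInv e), fun p ↦ cross p.1 p.2,
    ?_, fun p hp ↦ ?_, fun l hl ↦ existsUnique_mem_increasingPairs hσ (mt (hfix l).1 hl),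
    fun p hp p' hp' ↦ eq_of_cross_eq_cross_of_mem_increasingPairs e hp hp'⟩
  · have hcard := two_mul_card_increasingPairs_add_one hσ hfix
    rw [card_projectivePlane] at hcard
    lia
  · have hne : p.1 ≠ p.2 := (mem_increasingPairs.1 hp).1.ne
    exact ⟨hne, mt (hfix p.1).2 (apply_fst_ne_of_mem_increasingPairs hp),
      mt (hfix p.2).2 (apply_snd_ne_of_mem_increasingPairs hσ hp),
      cross_orthogonal_left hne, cross_orthogonal_right hne⟩

lemma pgIncident_iff_orthogonal {p l : PGElem q} : pgIncident q p l ↔ orthogonal p l := by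
  conv_rhs => rw [← p.mk_rep, ← l.mk_rep, orthogonal_mk]
  rfl

/-- In `PG(2,q)` with `q` an odd prime, the `q²+q+1` lines can be
partitioned into one singleton `{L₀}` and `(q²+q)/2` pairs of lines, each pair
having an intersection point, with pairwise distinct intersection points. -/
theorem pg_lines_pairing (hodd : Odd q) :
    ∃ (L₀ : PGElem q) (pairs : Finset (PGElem q × PGElem q))
      (pt : PGElem q × PGElem q → PGElem q),
      pairs.card = (q ^ 2 + q) / 2 ∧
      (∀ p ∈ pairs, p.1 ≠ p.2 ∧ p.1 ≠ L₀ ∧ p.2 ≠ L₀ ∧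
        pgIncident q (pt p) p.1 ∧ pgIncident q (pt p) p.2) ∧
      (∀ l : PGElem q, l ≠ L₀ → ∃! p, p ∈ pairs ∧ (l = p.1 ∨ l = p.2)) ∧
      (∀ p ∈ pairs, ∀ p' ∈ pairs, pt p = pt p' → p = p') := by
  simpa only [pgIncident_iff_orthogonal, Nat.card_zmod] using pg_lines_pairing_general (ZMod q)
end

section
/- The achromatic arboricity of the complete graph K_5 equals 4. -/
/-!
In a complete partition of `K_n` with `n ≥ 5` any two parts have at least three edges together,
because their union contains a cycle. If there were at least `n.choose 2 / 2` parts, then either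
all parts would have exactly two edges, or one part would be a single edge `e` and at most one
other part would have more than two edges.

* If all parts are matchings with two edges, the union of any two of them is an alternating 4-cycle,
  so every part covers all vertices. But a part covers only four vertices.
* If all parts have two edges and one of them is a path `abc`, each other part has to close a
  triangle or a 4-cycle with it. It does so at a vertex other than `a` and `c`, and two disjoint
  parts cannot use the same vertex. So there are fewer than `n` parts, which is too few.
* If one part is a single edge `e`, a second part with at most two edges forms a triangle with it,
  so all its edges meet `e`. The one possibly larger part then contains the complete graph on the
  at least three vertices outside `e`, and is not a forest.
-/

open SimpleGraph Finset

variable {V : Type*}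

lemma exists_isCycle_of_not_isAcyclic {S : Finset (Sym2 V)}
    (h : ¬ (fromEdgeSet (S : Set (Sym2 V))).IsAcyclic) :
    ∃ (v : V) (p : (fromEdgeSet (S : Set (Sym2 V))).Walk v v),
      p.IsCycle ∧ p.length ≤ #S ∧ ∀ e ∈ p.edges, e ∈ S := by
  simp only [IsAcyclic, not_forall, not_not] at h
  obtain ⟨v, p, hp⟩ := h
  have hmem : ∀ e ∈ p.edges, e ∈ S := fun e he => by
    have := p.edges_subset_edgeSet he
    rw [edgeSet_fromEdgeSet] at this
    exact this.1
  refine ⟨v, p, hp, ?_, hmem⟩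
  classical
  rw [← p.length_edges, ← List.toFinset_card_of_nodup hp.edges_nodup]
  exact card_le_card fun e he => hmem e (List.mem_toFinset.1 he)

lemma three_le_card_of_not_isAcyclic {S : Finset (Sym2 V)}
    (h : ¬ (fromEdgeSet (S : Set (Sym2 V))).IsAcyclic) : 3 ≤ #S := by
  obtain ⟨_, _, hcycle, hle, _⟩ := exists_isCycle_of_not_isAcyclic h
  exact hcycle.three_le_length.trans hle

/-- No two edges of `A` share a vertex. -/
def IsEdgeMatching (A : Finset (Sym2 V)) : Prop :=
  ∀ e ∈ A, ∀ f ∈ A, ∀ v, v ∈ e → v ∈ f → e = f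

lemma IsEdgeMatching.notMem_of_ne {A : Finset (Sym2 V)} (hA : IsEdgeMatching A) {x y z : V}
    (hxz : x ≠ z) (hxy : s(x, y) ∈ A) : s(y, z) ∉ A := fun hyz => by
  have := hA _ hxy _ hyz y (Sym2.mem_mk_right x y) (Sym2.mem_mk_left y z)
  grind

lemma exists_forall_notMem_of_two_mul_card_lt [Fintype V] {A : Finset (Sym2 V)}
    (hA : 2 * #A < Fintype.card V) : ∃ v, ∀ e ∈ A, v ∉ e := by
  classical
  have hcovered : #(A.biUnion Sym2.toFinset) ≤ #A * 2 :=
    card_biUnion_le_card_mul _ _ _ fun e _ => by rw [Sym2.card_toFinset]; split_ifs <;> simp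
  obtain ⟨v, -, hv⟩ := exists_mem_notMem_of_card_lt_card
    (show #(A.biUnion Sym2.toFinset) < #univ by rw [card_univ]; omega)
  exact ⟨v, by simpa using hv⟩

section ShortCycles

variable [DecidableEq V]

/-- The edge set of the closed walk `a b c a`, a triangle when the vertices are distinct. -/
def triangleEdges (a b c : V) : Finset (Sym2 V) := {s(a, b), s(b, c), s(c, a)}

/-- The edge set of the closed walk `a b c d a`, a 4-cycle when the vertices are distinct. -/
def squareEdges (a b c d : V) : Finset (Sym2 V) := {s(a, b), s(b, c), s(c, d), s(d, a)}

lemma card_triangleEdges {a b c : V} (h : [a, b, c].Nodup) : #(triangleEdges a b c) = 3 := by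
  rw [triangleEdges, card_eq_three]
  exact ⟨_, _, _, by grind, by grind, by grind, rfl⟩

lemma card_squareEdges {a b c d : V} (h : [a, b, c, d].Nodup) : #(squareEdges a b c d) = 4 := by
  rw [squareEdges, card_eq_succ]
  refine ⟨s(a, b), {s(b, c), s(c, d), s(d, a)}, by grind, rfl, ?_⟩
  exact card_eq_three.2 ⟨_, _, _, by grind, by grind, by grind, rfl⟩

lemma adj_of_triangleEdges_subset {S : Set (Sym2 V)} {a b c : V} (h : [a, b, c].Nodup)
    (hS : ↑(triangleEdges a b c) ⊆ S) :
    (fromEdgeSet S).Adj a b ∧ (fromEdgeSet S).Adj b c ∧ (fromEdgeSet S).Adj c a := by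
  simp only [triangleEdges, coe_insert, coe_singleton, Set.insert_subset_iff,
    Set.singleton_subset_iff] at hS
  grind [fromEdgeSet_adj]

lemma adj_of_squareEdges_subset {S : Set (Sym2 V)} {a b c d : V} (h : [a, b, c, d].Nodup)
    (hS : ↑(squareEdges a b c d) ⊆ S) :
    (fromEdgeSet S).Adj a b ∧ (fromEdgeSet S).Adj b c ∧ (fromEdgeSet S).Adj c d ∧
      (fromEdgeSet S).Adj d a := by
  simp only [squareEdges, coe_insert, coe_singleton, Set.insert_subset_iff,
    Set.singleton_subset_iff] at hS
  grind [fromEdgeSet_adj]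

lemma not_isAcyclic_of_triangleEdges_subset {S : Set (Sym2 V)} {a b c : V} (h : [a, b, c].Nodup)
    (hS : ↑(triangleEdges a b c) ⊆ S) : ¬ (fromEdgeSet S).IsAcyclic := fun hacyclic => by
  obtain ⟨hab, hbc, hca⟩ := adj_of_triangleEdges_subset h hS
  exact hacyclic.cliqueFree le_rfl {a, b, c} (is3Clique_triple_iff.2 ⟨hab, hca.symm, hbc⟩)

lemma not_isAcyclic_of_squareEdges_subset {S : Set (Sym2 V)} {a b c d : V}
    (h : [a, b, c, d].Nodup) (hS : ↑(squareEdges a b c d) ⊆ S) :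
    ¬ (fromEdgeSet S).IsAcyclic := fun hacyclic => by
  obtain ⟨hab, hbc, hcd, hda⟩ := adj_of_squareEdges_subset h hS
  let viaB : (fromEdgeSet S).Path a c := ⟨.cons hab (.cons hbc .nil), by
    simp only [Walk.isPath_def, Walk.support_cons, Walk.support_nil]; grind⟩
  let viaD : (fromEdgeSet S).Path a c := ⟨.cons hda.symm (.cons hcd.symm .nil), by
    simp only [Walk.isPath_def, Walk.support_cons, Walk.support_nil]; grind⟩
  have hpaths : viaB = viaD := (hacyclic.subsingleton_path a c).elim _ _
  have hbd : b = d := by simpa [viaB, viaD] using congrArg (fun p => p.1.snd) hpaths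
  exact absurd hbd (by grind)

lemma exists_triangleEdges_subset_or_eq_squareEdges {S : Finset (Sym2 V)} (hS : #S ≤ 4)
    (h : ¬ (fromEdgeSet (S : Set (Sym2 V))).IsAcyclic) :
    (∃ a b c, [a, b, c].Nodup ∧ triangleEdges a b c ⊆ S) ∨
      ∃ a b c d, [a, b, c, d].Nodup ∧ S = squareEdges a b c d := by
  obtain ⟨a, p, hcycle, hlength, hedges⟩ := exists_isCycle_of_not_isAcyclic h
  have hthree := hcycle.three_le_length
  have hnodup := hcycle.support_nodup
  match p with
  | .cons (v := b) _ (.cons (v := c) _ (.cons _ .nil)) =>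
    have hdistinct : [a, b, c].Nodup := by
      simp only [Walk.support_cons, Walk.support_nil, List.tail_cons] at hnodup; grind
    exact .inl ⟨a, b, c, hdistinct, by grind [triangleEdges, Walk.edges_cons]⟩
  | .cons (v := b) _ (.cons (v := c) _ (.cons (v := d) _ (.cons _ .nil))) =>
    have hdistinct : [a, b, c, d].Nodup := by
      simp only [Walk.support_cons, Walk.support_nil, List.tail_cons] at hnodup; grind
    refine .inr ⟨a, b, c, d, hdistinct, (eq_of_subset_of_card_le ?_ ?_).symm⟩
    · grind [squareEdges, Walk.edges_cons]
    · rwa [card_squareEdges hdistinct]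
  | .cons _ (.cons _ (.cons _ (.cons _ (.cons _ _)))) =>
    simp only [Walk.length_cons] at hlength
    omega

lemma exists_ne_mem_mem_of_mem_squareEdges {a b c d : V} (h : [a, b, c, d].Nodup) {e : Sym2 V}
    (he : e ∈ squareEdges a b c d) {v : V} (hv : v ∈ e) :
    ∃ f ∈ squareEdges a b c d, ∃ g ∈ squareEdges a b c d, f ≠ g ∧ v ∈ f ∧ v ∈ g := by
  have hmem : v = a ∨ v = b ∨ v = c ∨ v = d := by
    simp only [squareEdges, mem_insert, mem_singleton] at he
    obtain rfl | rfl | rfl | rfl := he <;> grind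
  obtain rfl | rfl | rfl | rfl := hmem
  · exact ⟨s(d, v), by simp [squareEdges], s(v, b), by simp [squareEdges], by grind, by simp⟩
  · exact ⟨s(a, v), by simp [squareEdges], s(v, c), by simp [squareEdges], by grind, by simp⟩
  · exact ⟨s(b, v), by simp [squareEdges], s(v, d), by simp [squareEdges], by grind, by simp⟩
  · exact ⟨s(c, v), by simp [squareEdges], s(v, a), by simp [squareEdges], by grind, by simp⟩

/- A triangle is not a union of two matchings, and the edges of a square alternate. -/
lemma IsEdgeMatching.exists_mem_of_not_isAcyclic {A B : Finset (Sym2 V)} (hA : IsEdgeMatching A)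
    (hB : IsEdgeMatching B) (hcard : #(A ∪ B) ≤ 4)
    (h : ¬ (fromEdgeSet ((A ∪ B : Finset (Sym2 V)) : Set (Sym2 V))).IsAcyclic)
    {e : Sym2 V} (he : e ∈ B) {v : V} (hv : v ∈ e) : ∃ f ∈ A, v ∈ f := by
  obtain ⟨a, b, c, hdistinct, hsub⟩ | ⟨a, b, c, d, hdistinct, hAB⟩ :=
    exists_triangleEdges_subset_or_eq_squareEdges hcard h
  · simp only [triangleEdges, insert_subset_iff, singleton_subset_iff, mem_union] at hsub
    have hconsecutive : ∀ {M : Finset (Sym2 V)}, IsEdgeMatching M →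
        (s(a, b) ∈ M → s(b, c) ∉ M) ∧ (s(b, c) ∈ M → s(c, a) ∉ M) ∧
          (s(c, a) ∈ M → s(a, b) ∉ M) := fun hM =>
      ⟨hM.notMem_of_ne (by grind), hM.notMem_of_ne (by grind), hM.notMem_of_ne (by grind)⟩
    have hconsA := hconsecutive hA
    have hconsB := hconsecutive hB
    tauto
  · obtain ⟨f, hf, g, hg, hne, hvf, hvg⟩ :=
      exists_ne_mem_mem_of_mem_squareEdges hdistinct (hAB ▸ mem_union_right A he) hv
    rw [← hAB, mem_union] at hf hg
    rcases hf with hf | hf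
    · exact ⟨f, hf, hvf⟩
    · exact ⟨g, hg.resolve_right fun hgB => hne (hB f hf g hgB v hvf hvg), hvg⟩

lemma exists_eq_path_of_not_isEdgeMatching {A : Finset (Sym2 V)} (hcard : #A = 2)
    (hdiag : ∀ e ∈ A, ¬ e.IsDiag) (hA : ¬ IsEdgeMatching A) :
    ∃ a b c, [a, b, c].Nodup ∧ A = {s(a, b), s(b, c)} := by
  simp only [IsEdgeMatching, not_forall] at hA
  obtain ⟨e, he, f, hf, b, hbe, hbf, hne⟩ := hA
  obtain ⟨a, rfl⟩ := hbe
  obtain ⟨c, rfl⟩ := hbf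
  have hba : b ≠ a := by simpa using hdiag _ he
  have hbc : b ≠ c := by simpa using hdiag _ hf
  rw [Sym2.eq_swap] at he hne
  refine ⟨a, b, c, by grind, (eq_of_subset_of_card_le ?_ ?_).symm⟩
  · exact insert_subset he (singleton_subset_iff.2 hf)
  · rw [hcard, card_pair hne]

/-- `B` contains a detour between two vertices of the path `a b c`: either the chord `ac`,
which is recorded by `z = b`, or two edges from a new vertex `z` to the path. -/
def ClosesPathAt (a b c z : V) (B : Finset (Sym2 V)) : Prop :=
  (z = b ∧ s(a, c) ∈ B) ∨ (z ∉ ({a, b, c} : Finset V) ∧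
    ∃ x ∈ ({a, b, c} : Finset V), ∃ y ∈ ({a, b, c} : Finset V),
      x ≠ y ∧ s(z, x) ∈ B ∧ s(z, y) ∈ B)

lemma ClosesPathAt.not_disjoint {a b c z : V} {A B : Finset (Sym2 V)}
    (hA : ClosesPathAt a b c z A) (hB : ClosesPathAt a b c z B) : ¬ Disjoint A B := by
  rw [Finset.not_disjoint_iff]
  obtain ⟨rfl, hacA⟩ | ⟨hz, x, hx, y, hy, hxy, hxA, hyA⟩ := hA
  · obtain ⟨-, hacB⟩ | ⟨hz, -⟩ := hB
    · exact ⟨_, hacA, hacB⟩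
    · simp at hz
  · obtain ⟨rfl, -⟩ | ⟨-, x', hx', y', hy', hxy', hxB, hyB⟩ := hB
    · simp at hz
    · simp only [mem_insert, mem_singleton] at hx hy hx' hy'
      have : x = x' ∨ x = y' ∨ y = x' ∨ y = y' := by grind
      obtain rfl | rfl | rfl | rfl := this
      exacts [⟨_, hxA, hxB⟩, ⟨_, hxA, hyB⟩, ⟨_, hyA, hxB⟩, ⟨_, hyA, hyB⟩]

/- The two edges at `z` are all of `B`, so the edges `xx'` and `yy'` lie on the path `abc`. -/
lemma closesPathAt_of_notMem {a b c z x y x' y' : V} {B : Finset (Sym2 V)} {H : SimpleGraph V}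
    (hH : H ≤ fromEdgeSet (({s(a, b), s(b, c)} ∪ B : Finset (Sym2 V)) : Set (Sym2 V)))
    (hB : #B ≤ 2) (hz : z ∉ ({a, b, c} : Finset V)) (hxy : x ≠ y)
    (hx' : x' ≠ z) (hy' : y' ≠ z) (hzx : H.Adj z x) (hzy : H.Adj z y) (hxx' : H.Adj x x')
    (hyy' : H.Adj y y') : ClosesPathAt a b c z B := by
  replace hzx := hH hzx
  replace hzy := hH hzy
  replace hxx' := hH hxx'
  replace hyy' := hH hyy'
  simp only [fromEdgeSet_adj, mem_coe, mem_union] at hzx hzy hxx' hyy'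
  have hpath : ∀ {u v}, s(u, v) ∈ ({s(a, b), s(b, c)} : Finset (Sym2 V)) →
      u ∈ ({a, b, c} : Finset V) := by
    simp only [mem_insert, mem_singleton, Sym2.eq_iff]
    grind
  have hzxB : s(z, x) ∈ B := hzx.1.resolve_left (hz ∘ hpath)
  have hzyB : s(z, y) ∈ B := hzy.1.resolve_left (hz ∘ hpath)
  have hB_eq : {s(z, x), s(z, y)} = B :=
    eq_of_subset_of_card_le (insert_subset hzxB (singleton_subset_iff.2 hzyB))
      (by rwa [card_pair fun hzxy => hxy (Sym2.congr_right.1 hzxy)])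
  have hz_mem : ∀ e ∈ B, z ∈ e := by simp [← hB_eq]
  have hx : x ∈ ({a, b, c} : Finset V) := hpath <| hxx'.1.resolve_right fun hxx'B =>
    (Sym2.mem_iff.1 (hz_mem _ hxx'B)).elim hzx.2 hx'.symm
  have hy : y ∈ ({a, b, c} : Finset V) := hpath <| hyy'.1.resolve_right fun hyy'B =>
    (Sym2.mem_iff.1 (hz_mem _ hyy'B)).elim hzy.2 hy'.symm
  exact .inr ⟨hz, x, hx, y, hy, hxy, hzxB, hzyB⟩

lemma adj_of_triangle_subset {H : SimpleGraph V} {a b c p q r : V} (hac : a ≠ c)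
    (hpqr : [p, q, r].Nodup) (hsub : {p, q, r} ⊆ ({a, b, c} : Finset V))
    (hpq : H.Adj p q) (hqr : H.Adj q r) (hrp : H.Adj r p) : H.Adj a c := by
  have heq : {p, q, r} = ({a, b, c} : Finset V) :=
    eq_of_subset_of_card_le hsub (card_le_three.trans_eq (by grind))
  have ha : a ∈ ({p, q, r} : Finset V) := by simp [heq]
  have hc : c ∈ ({p, q, r} : Finset V) := by simp [heq]
  simp only [mem_insert, mem_singleton] at ha hc
  obtain rfl | rfl | rfl := ha <;> obtain rfl | rfl | rfl := hc <;> grind [Adj.symm]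

lemma exists_closesPathAt {a b c : V} (hdistinct : [a, b, c].Nodup) {B : Finset (Sym2 V)}
    (hB : #B ≤ 2)
    (h : ¬ (fromEdgeSet (({s(a, b), s(b, c)} ∪ B : Finset (Sym2 V)) : Set (Sym2 V))).IsAcyclic) :
    ∃ z, ClosesPathAt a b c z B := by
  by_contra! hnot
  set H := fromEdgeSet (({s(a, b), s(b, c)} ∪ B : Finset (Sym2 V)) : Set (Sym2 V)) with hH
  have hvertex : ∀ {z x y x' y'}, x ≠ y → x' ≠ z → y' ≠ z → H.Adj z x → H.Adj z y → H.Adj x x' →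
      H.Adj y y' → z ∈ ({a, b, c} : Finset V) := fun hxy hx' hy' hzx hzy hxx' hyy' => by
    by_contra hz
    exact hnot _ (closesPathAt_of_notMem hH.le hB hz hxy hx' hy' hzx hzy hxx' hyy')
  obtain ⟨p, q, r, hpqr, hsub⟩ | ⟨p, q, r, s, hpqrs, hS⟩ :=
    exists_triangleEdges_subset_or_eq_squareEdges ((card_union_le _ _).trans
      (Nat.add_le_add card_le_two hB)) h
  · have hnac : ¬ H.Adj a c := by
      have : s(a, c) ∉ B := fun hac => hnot b (.inl ⟨rfl, hac⟩)
      simp only [hH, fromEdgeSet_adj, mem_coe, mem_union, mem_insert, mem_singleton, Sym2.eq_iff]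
      grind
    obtain ⟨hpq, hqr, hrp⟩ := adj_of_triangleEdges_subset hpqr (coe_subset.2 hsub)
    have hmem : {p, q, r} ⊆ ({a, b, c} : Finset V) := by
      simp only [insert_subset_iff, singleton_subset_iff]
      exact ⟨hvertex (by grind) hrp.ne hpq.ne' hpq hrp.symm hqr hqr.symm,
        hvertex (by grind) hpq.ne hqr.ne' hqr hpq.symm hrp hrp.symm,
        hvertex (by grind) hqr.ne hrp.ne' hrp hqr.symm hpq hpq.symm⟩
    exact hnac (adj_of_triangle_subset (by grind) hpqr hmem hpq hqr hrp)
  · obtain ⟨hpq, hqr, hrs, hsp⟩ := adj_of_squareEdges_subset hpqrs (coe_subset.2 hS.ge)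
    have hmem : {p, q, r, s} ⊆ ({a, b, c} : Finset V) := by
      simp only [insert_subset_iff, singleton_subset_iff]
      refine ⟨hvertex ?_ ?_ ?_ hpq hsp.symm hqr hrs.symm,
        hvertex ?_ ?_ ?_ hqr hpq.symm hrs hsp.symm,
        hvertex ?_ ?_ ?_ hrs hqr.symm hsp hpq.symm,
        hvertex ?_ ?_ ?_ hsp hrs.symm hpq hqr.symm⟩ <;> grind
    have hfour : #{p, q, r, s} = 4 := by
      simpa using List.toFinset_card_of_nodup hpqrs
    have := (card_le_card hmem).trans card_le_three
    omega

end ShortCycles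

lemma exists_mem_mem_of_card_le_three {S : Finset (Sym2 V)} (hS : #S ≤ 3)
    (h : ¬ (fromEdgeSet (S : Set (Sym2 V))).IsAcyclic) {e f : Sym2 V} (he : e ∈ S) (hf : f ∈ S) :
    ∃ v, v ∈ e ∧ v ∈ f := by
  classical
  obtain ⟨a, b, c, hdistinct, hsub⟩ | ⟨a, b, c, d, hdistinct, rfl⟩ :=
    exists_triangleEdges_subset_or_eq_squareEdges (hS.trans (by norm_num)) h
  · obtain rfl := eq_of_subset_of_card_le hsub (hS.trans (card_triangleEdges hdistinct).ge)
    simp only [triangleEdges, mem_insert, mem_singleton] at he hf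
    obtain rfl | rfl | rfl := he <;> obtain rfl | rfl | rfl := hf <;> simp
  · grind [card_squareEdges hdistinct]

lemma exists_forall_ne_le_two {ι : Type*} [Fintype ι] {f : ι → ℕ} {i : ι} (hi : f i = 1)
    (hf : ∀ l, l ≠ i → 2 ≤ f l) (hsum : ∑ l, f l ≤ 2 * Fintype.card ι) :
    ∃ j, ∀ l, l ≠ j → f l ≤ 2 := by
  classical
  by_contra! hlarge
  obtain ⟨l, hli, hl⟩ := hlarge i
  obtain ⟨m, hml, hm⟩ := hlarge l
  have hle : ∑ n, (2 + (if n = l then 1 else 0) + (if n = m then 1 else 0)) ≤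
      ∑ n, (f n + if n = i then 1 else 0) := sum_le_sum fun n _ => by grind
  simp only [sum_add_distrib, sum_const, smul_eq_mul, card_univ, sum_ite_eq', mem_univ,
    if_true] at hle
  omega

lemma two_mul_lt_choose_two_of_lt {n k : ℕ} (hn : 5 ≤ n) (hk : k < n) : 2 * k < n.choose 2 := by
  suffices 2 * (n - 1) < n.choose 2 by omega
  clear hk
  induction n, hn using Nat.le_induction with
  | base => decide
  | succ m hm ih =>
    have hchoose : (m + 1).choose 2 = m + m.choose 2 := by
      rw [Nat.choose_succ_succ', Nat.choose_one_right]
    omega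

namespace IsCompleteForestPartition

variable {G : SimpleGraph V} {k : ℕ}

lemma exists_finset [Finite V] {P : Fin k → Set (Sym2 V)} (h : IsCompleteForestPartition G k P) :
    ∃ F : Fin k → Finset (Sym2 V), IsCompleteForestPartition G k (fun i => (F i : Set (Sym2 V))) :=
  ⟨fun i => (P i).toFinite.toFinset, by simpa using h⟩

section FinsetParts

variable {F : Fin k → Finset (Sym2 V)}
  (h : IsCompleteForestPartition G k (fun i => (F i : Set (Sym2 V))))
include h

lemma mem_edgeSet_iff (e : Sym2 V) : e ∈ G.edgeSet ↔ ∃ i, e ∈ F i := by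
  simp [← h.2.2.1]

lemma disjoint {i j : Fin k} (hij : i ≠ j) : Disjoint (F i) (F j) :=
  disjoint_coe.1 (h.2.1 i j hij)

lemma not_isDiag {i : Fin k} {e : Sym2 V} (he : e ∈ F i) : ¬ e.IsDiag :=
  G.not_isDiag_of_mem_edgeSet ((h.mem_edgeSet_iff e).2 ⟨i, he⟩)

lemma sum_card_eq_card_edgeFinset [Fintype G.edgeSet] : ∑ i, #(F i) = #G.edgeFinset := by
  classical
  rw [← card_biUnion fun i _ j _ hij => h.disjoint hij]
  congr 1
  ext e
  simp [h.mem_edgeSet_iff]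

lemma not_isAcyclic_union [DecidableEq V] {i j : Fin k} (hij : i ≠ j) :
    ¬ (fromEdgeSet ((F i ∪ F j : Finset (Sym2 V)) : Set (Sym2 V))).IsAcyclic := by
  simpa using h.2.2.2.2 i j hij

lemma three_le_card_add_card {i j : Fin k} (hij : i ≠ j) : 3 ≤ #(F i) + #(F j) := by
  classical
  exact (three_le_card_of_not_isAcyclic (h.not_isAcyclic_union hij)).trans (card_union_le _ _)

lemma exists_mem_mem_of_card_le_two {i j : Fin k} (hi : #(F i) = 1) (hj : #(F j) ≤ 2)
    {e f : Sym2 V} (he : e ∈ F i) (hf : f ∈ F j) : ∃ v, v ∈ e ∧ v ∈ f := by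
  classical
  by_cases hij : i = j
  · subst hij
    obtain rfl := card_le_one.1 hi.le e he f hf
    exact ⟨_, e.out_fst_mem, e.out_fst_mem⟩
  · refine exists_mem_mem_of_card_le_three ((card_union_le _ _).trans ?_)
      (h.not_isAcyclic_union hij) (mem_union_left _ he) (mem_union_right _ hf)
    omega

lemma exists_mem_of_forall_isEdgeMatching (hmatching : ∀ i, IsEdgeMatching (F i))
    (hcard : ∀ i, #(F i) ≤ 2) {e : Sym2 V} (he : e ∈ G.edgeSet) {v : V} (hv : v ∈ e)
    (i : Fin k) : ∃ f ∈ F i, v ∈ f := by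
  classical
  obtain ⟨j, hej⟩ := (h.mem_edgeSet_iff e).1 he
  by_cases hij : i = j
  · exact ⟨e, hij ▸ hej, hv⟩
  · exact (hmatching i).exists_mem_of_not_isAcyclic (hmatching j)
      ((card_union_le _ _).trans (Nat.add_le_add (hcard i) (hcard j)))
      (h.not_isAcyclic_union hij) hej hv

/- The other parts close the path at distinct vertices other than `a` and `c`. -/
lemma lt_card_of_eq_path [Fintype V] [DecidableEq V] (hcard : ∀ j, #(F j) ≤ 2) {a b c : V}
    (hdistinct : [a, b, c].Nodup) {i : Fin k} (hi : F i = {s(a, b), s(b, c)}) :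
    k < Fintype.card V := by
  have hcloses : ∀ j ∈ univ.erase i, ∃ z, ClosesPathAt a b c z (F j) := fun j hj =>
    exists_closesPathAt hdistinct (hcard j) (hi ▸ h.not_isAcyclic_union (ne_of_mem_erase hj).symm)
  have : Nonempty V := ⟨a⟩
  choose! z hz using hcloses
  have hmaps : ∀ j ∈ univ.erase i, z j ∈ ({a, c}ᶜ : Finset V) := fun j hj => by
    simp only [mem_compl, mem_insert, mem_singleton]
    obtain ⟨hzb, -⟩ | ⟨hzabc, -⟩ := hz j hj <;> grind
  have hinj : Set.InjOn z (univ.erase i) := fun j hj l hl hjl => by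
    by_contra hne
    exact (hz j hj).not_disjoint (hjl ▸ hz l hl) (h.disjoint hne)
  have hle : #(univ.erase i) ≤ #({a, c}ᶜ : Finset V) := card_le_card_of_injOn z hmaps hinj
  have hac : #{a, c} = 2 := card_pair (by grind)
  have htwo : #{a, c} ≤ Fintype.card V := card_le_univ _
  rw [card_erase_of_mem (mem_univ i), card_univ, Fintype.card_fin, card_compl] at hle
  omega

end FinsetParts

section CompleteGraph

variable [Fintype V] {F : Fin k → Finset (Sym2 V)}
  (h : IsCompleteForestPartition (⊤ : SimpleGraph V) k (fun i => (F i : Set (Sym2 V))))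
  (hV : 5 ≤ Fintype.card V)
include h hV

lemma exists_not_isEdgeMatching (hcard : ∀ i, #(F i) ≤ 2) : ∃ i, ¬ IsEdgeMatching (F i) := by
  by_contra! hmatching
  have : Nontrivial V := Fintype.one_lt_card_iff_nontrivial.1 (by omega)
  obtain ⟨u, w, huw⟩ := exists_pair_ne V
  obtain ⟨i, -⟩ := (h.mem_edgeSet_iff s(u, w)).1 huw
  have hlt : 2 * #(F i) < Fintype.card V := by have := hcard i; omega
  obtain ⟨v, hv⟩ := exists_forall_notMem_of_two_mul_card_lt hlt
  obtain ⟨x, hxv⟩ := exists_ne v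
  obtain ⟨f, hf, hvf⟩ := h.exists_mem_of_forall_isEdgeMatching hmatching hcard
    (show s(x, v) ∈ edgeSet ⊤ from hxv) (Sym2.mem_mk_right x v) i
  exact hv f hf hvf

/- Parts of size at most `2` only contain edges that meet the edge of `F i`. If `F j` were the
only larger part, it would contain every edge disjoint from that of `F i`, hence a triangle. -/
lemma exists_ne_two_lt_card {i : Fin k} (hi : #(F i) = 1) (j : Fin k) :
    ∃ l, l ≠ j ∧ 2 < #(F l) := by
  classical
  by_contra! hsmall
  obtain ⟨e, he⟩ := card_pos.1 (hi ▸ one_pos)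
  have hthree : 2 < #e.toFinsetᶜ := by
    rw [card_compl, Sym2.card_toFinset_of_not_isDiag e (h.not_isDiag he)]
    omega
  obtain ⟨x, y, z, hx, hy, hz, hxy, hxz, hyz⟩ := two_lt_card_iff.1 hthree
  simp only [mem_compl, Sym2.mem_toFinset] at hx hy hz
  have hmem : ∀ u v, u ∉ e → v ∉ e → u ≠ v → s(u, v) ∈ F j := fun u v hu hv huv => by
    obtain ⟨l, hl⟩ := (h.mem_edgeSet_iff s(u, v)).1 huv
    by_cases hlj : l = j
    · exact hlj ▸ hl
    · obtain ⟨w, hwe, hw⟩ := h.exists_mem_mem_of_card_le_two hi (hsmall l hlj) he hl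
      grind
  refine not_isAcyclic_of_triangleEdges_subset (S := F j) (a := x) (b := y) (c := z) (by grind) ?_
    (h.2.2.2.1 j)
  simp only [triangleEdges, coe_subset, insert_subset_iff, singleton_subset_iff]
  exact ⟨hmem x y hx hy hxy, hmem y z hy hz hyz, hmem z x hz hx hxz.symm⟩

theorem two_mul_lt_choose_two : 2 * k < (Fintype.card V).choose 2 := by
  classical
  by_contra! hle
  have hsum : ∑ i, #(F i) = (Fintype.card V).choose 2 := by
    rw [h.sum_card_eq_card_edgeFinset, card_edgeFinset_top_eq_card_choose_two]
  by_cases htwo : ∀ i, 2 ≤ #(F i)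
  · have hcard : ∀ i, #(F i) = 2 := fun i =>
      ((sum_eq_sum_iff_of_le fun i _ => htwo i).1 (le_antisymm
        (sum_le_sum fun i _ => htwo i) (by simpa [hsum, mul_comm] using hle)) i (mem_univ i)).symm
    obtain ⟨i, hi⟩ := h.exists_not_isEdgeMatching hV fun i => (hcard i).le
    obtain ⟨a, b, c, hdistinct, hpath⟩ :=
      exists_eq_path_of_not_isEdgeMatching (hcard i) (fun _ => h.not_isDiag) hi
    have hk := h.lt_card_of_eq_path (fun j => (hcard j).le) hdistinct hpath
    have hchoose := two_mul_lt_choose_two_of_lt hV hk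
    omega
  · push Not at htwo
    obtain ⟨i, hi⟩ := htwo
    have hone : #(F i) = 1 := by
      have := card_pos.2 (coe_nonempty.1 (h.1 i))
      omega
    obtain ⟨j, hj⟩ := exists_forall_ne_le_two (f := fun i => #(F i)) hone (fun l hl => by
      have := h.three_le_card_add_card hl
      omega) (by simpa [hsum] using hle)
    obtain ⟨l, hlj, hl⟩ := h.exists_ne_two_lt_card hV hone j
    exact hl.not_ge (hj l hlj)

end CompleteGraph

end IsCompleteForestPartition

/-- A complete forest partition of `K_5` into the edge `01` and, for `v = 2, 3, 4`, the path `0v1`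
together with the edge joining the two remaining vertices. -/
def partsK5 : Fin 4 → Finset (Sym2 (Fin 5)) :=
  ![{s(0, 1)}, {s(0, 2), s(1, 2), s(3, 4)}, {s(0, 3), s(1, 3), s(2, 4)},
    {s(0, 4), s(1, 4), s(2, 3)}]

lemma isAcyclic_partsK5 (i : Fin 4) :
    (fromEdgeSet (partsK5 i : Set (Sym2 (Fin 5)))).IsAcyclic := by
  by_contra hcyclic
  have hthree := three_le_card_of_not_isAcyclic hcyclic
  have hcard : ∀ i, #(partsK5 i) ≤ 3 := by decide
  have hapart : ∀ i, 3 ≤ #(partsK5 i) →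
      ∃ e ∈ partsK5 i, ∃ f ∈ partsK5 i, ∀ v, ¬ (v ∈ e ∧ v ∈ f) := by decide
  obtain ⟨e, he, f, hf, hef⟩ := hapart i hthree
  obtain ⟨v, hv⟩ := exists_mem_mem_of_card_le_three (hcard i) hcyclic he hf
  exact hef v hv

lemma not_isAcyclic_partsK5_union {i j : Fin 4} (hij : i ≠ j) :
    ¬ (fromEdgeSet (partsK5 i ∪ partsK5 j : Set (Sym2 (Fin 5)))).IsAcyclic := by
  rw [← coe_union]
  have htriangle : ∀ j, j ≠ 0 → [0, 1, j.succ].Nodup ∧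
      triangleEdges 0 1 j.succ ⊆ partsK5 0 ∪ partsK5 j := by decide
  have hsquare : ∀ i j, i ≠ 0 → j ≠ 0 → i ≠ j → [0, i.succ, 1, j.succ].Nodup ∧
      squareEdges 0 i.succ 1 j.succ ⊆ partsK5 i ∪ partsK5 j := by decide
  rcases eq_or_ne i 0 with rfl | hi
  · obtain ⟨hdistinct, hsub⟩ := htriangle j hij.symm
    exact not_isAcyclic_of_triangleEdges_subset hdistinct (coe_subset.2 hsub)
  rcases eq_or_ne j 0 with rfl | hj
  · obtain ⟨hdistinct, hsub⟩ := htriangle i hij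
    rw [union_comm] at hsub
    exact not_isAcyclic_of_triangleEdges_subset hdistinct (coe_subset.2 hsub)
  · obtain ⟨hdistinct, hsub⟩ := hsquare i j hi hj hij
    exact not_isAcyclic_of_squareEdges_subset hdistinct (coe_subset.2 hsub)

lemma isCompleteForestPartition_partsK5 :
    IsCompleteForestPartition (⊤ : SimpleGraph (Fin 5)) 4
      (fun i => (partsK5 i : Set (Sym2 (Fin 5)))) := by
  have hnonempty : ∀ i, (partsK5 i).Nonempty := by decide
  have hdisjoint : ∀ i j, i ≠ j → Disjoint (partsK5 i) (partsK5 j) := by decide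
  have hcover : ∀ e, (∃ i, e ∈ partsK5 i) ↔ ¬ e.IsDiag := by decide
  refine ⟨fun i => coe_nonempty.2 (hnonempty i), fun i j hij => disjoint_coe.2 (hdisjoint i j hij),
    ?_, isAcyclic_partsK5, fun i j => not_isAcyclic_partsK5_union⟩
  ext e
  simpa using hcover e

/-- The achromatic arboricity of `K_5` equals `4`. -/
theorem achromaticArboricity_K5 :
    achromaticArboricity (⊤ : SimpleGraph (Fin 5)) = 4 := by
  apply IsGreatest.csSup_eq
  refine ⟨⟨_, isCompleteForestPartition_partsK5⟩, fun k ⟨P, hP⟩ => ?_⟩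
  obtain ⟨F, hF⟩ := hP.exists_finset
  have hlt : 2 * k < (Fintype.card (Fin 5)).choose 2 := hF.two_mul_lt_choose_two (by simp)
  rw [Fintype.card_fin, show Nat.choose 5 2 = 10 from rfl] at hlt
  omega
end

section
/- The achromatic arboricity of the complete graph K_6 equals 6. -/
/-!
Let a complete forest partition of `G` have `k` classes, and let `Δ` be the maximum degree of `G`.

If some class is a single edge `uv`, then every other class connects `u` to `v`, so every class has
an edge at `u` and `k ≤ Δ`.

Two classes of size two have a cyclic union only if one of them is a path whose ends are joined by
an edge of the other, or both are paths with the same ends, or they are the two pairs of opposite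
edges of a 4-cycle. With at least four such classes, 4-cycles do not occur and two of the classes
are paths with the same ends `a`, `b`; then every other such class is again a path from `a` to `b`
or contains the edge `ab`. So all of them have an edge at `a`, and there are at most `max 3 Δ`
classes of size two.

Without singletons, counting edges gives `3 * k ≤ |E(G)| + max 3 Δ`. For `K₆` these bounds are
`k ≤ 5` and `3 * k ≤ 20`, and an explicit partition attains `k = 6`.
-/

section

open SimpleGraph Finset
open scoped Function

variable {V : Type*}

theorem not_isAcyclic_fromEdgeSet_iff {S : Set (Sym2 V)} :
    ¬ (fromEdgeSet S).IsAcyclic ↔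
      ∃ (n : ℕ) (v : Fin (n + 3) → V), v.Injective ∧ ∀ i, s(v i, v (i + 1)) ∈ S := by
  rw [isAcyclic_iff_free_cycleGraph]
  push Not
  constructor
  · rintro ⟨n, hn, ⟨f⟩⟩
    obtain ⟨n, rfl⟩ := Nat.exists_eq_add_of_le' hn
    exact ⟨n, f, f.injective, fun i ↦ (f.toHom.map_adj (by simp [cycleGraph_adj])).1⟩
  · rintro ⟨n, v, hv, hS⟩
    refine ⟨n + 3, by lia, ⟨⟨v, fun {i j} hij ↦ ⟨?_, hv.ne hij.ne⟩⟩, hv⟩⟩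
    rcases cycleGraph_adj.1 hij with h | h <;> obtain rfl := sub_eq_iff_eq_add'.1 h
    · change s(v (j + 1), v j) ∈ S
      exact Sym2.eq_swap ▸ hS j
    · exact hS i

theorem edges_injective_of_injective {n : ℕ} {v : Fin (n + 3) → V} (hv : v.Injective) :
    Function.Injective fun i ↦ s(v i, v (i + 1)) := by
  intro i j hij
  rcases Sym2.eq_iff.1 hij with ⟨h, -⟩ | ⟨h₁, h₂⟩
  · exact hv h
  · have h : i + (1 + 1) = i := by rw [← add_assoc, hv h₂, hv h₁]
    have : (1 + 1 : Fin (n + 3)) = 0 := by simpa using h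
    simp [Fin.ext_iff, Fin.val_add, Nat.mod_eq_of_lt (show 2 < n + 3 by lia)] at this

theorem exists_cycle_length_le_ncard {S : Set (Sym2 V)} (hfin : S.Finite)
    (h : ¬ (fromEdgeSet S).IsAcyclic) :
    ∃ (n : ℕ) (v : Fin (n + 3) → V),
      v.Injective ∧ n + 3 ≤ S.ncard ∧ ∀ i, s(v i, v (i + 1)) ∈ S := by
  obtain ⟨n, v, hv, hS⟩ := not_isAcyclic_fromEdgeSet_iff.1 h
  have hn := Set.ncard_le_ncard (Set.range_subset_iff.2 hS) hfin
  rw [Set.ncard_range_of_injective (edges_injective_of_injective hv), Nat.card_fin] at hn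
  exact ⟨n, v, hv, hn, hS⟩

theorem exists_triangle_or_square {S : Set (Sym2 V)} (hfin : S.Finite) (hcard : S.ncard ≤ 4)
    (h : ¬ (fromEdgeSet S).IsAcyclic) :
    (∃ a b c, [a, b, c].Nodup ∧ s(a, b) ∈ S ∧ s(b, c) ∈ S ∧ s(c, a) ∈ S) ∨
      ∃ a b c d, [a, b, c, d].Nodup ∧
        s(a, b) ∈ S ∧ s(b, c) ∈ S ∧ s(c, d) ∈ S ∧ s(d, a) ∈ S := by
  obtain ⟨n, v, hv, hn, hS⟩ := exists_cycle_length_le_ncard hfin h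
  obtain rfl | rfl : n = 0 ∨ n = 1 := by lia
  · exact .inl ⟨v 0, v 1, v 2, by simp [hv.eq_iff], hS 0, hS 1, hS 2⟩
  · exact .inr ⟨v 0, v 1, v 2, v 3, by simp [hv.eq_iff], hS 0, hS 1, hS 2, hS 3⟩

/-- `IsCherry A e` says that `A` is the edge set of a path with two edges and that `e` joins its
ends, so that `e` closes the path up to a triangle. -/
def IsCherry (A : Set (Sym2 V)) (e : Sym2 V) : Prop :=
  ∃ x a b, [x, a, b].Nodup ∧ A = {s(x, a), s(x, b)} ∧ e = s(a, b)

/-- `FormSquare A B` says that `A` and `B` are the two pairs of opposite edges of a `4`-cycle. -/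
def FormSquare (A B : Set (Sym2 V)) : Prop :=
  ∃ a b c d, [a, b, c, d].Nodup ∧ A = {s(a, b), s(c, d)} ∧ B = {s(b, c), s(d, a)}

theorem FormSquare.symm {A B : Set (Sym2 V)} (h : FormSquare A B) : FormSquare B A := by
  obtain ⟨a, b, c, d, hnodup, rfl, rfl⟩ := h
  exact ⟨b, c, d, a, by grind, rfl, by rw [Set.pair_comm]⟩

theorem IsCherry.unique {A : Set (Sym2 V)} {e f : Sym2 V} (he : IsCherry A e)
    (hf : IsCherry A f) : e = f := by
  obtain ⟨x, a, b, hnodup, rfl, rfl⟩ := he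
  obtain ⟨y, c, d, hnodup', h, rfl⟩ := hf
  rw [Set.pair_eq_pair_iff] at h
  grind

theorem FormSquare.not_isCherry_left {A B : Set (Sym2 V)} (h : FormSquare A B) (e : Sym2 V) :
    ¬ IsCherry A e := by
  obtain ⟨a, b, c, d, hnodup, rfl, rfl⟩ := h
  rintro ⟨x, p, q, -, h, -⟩
  rw [Set.pair_eq_pair_iff] at h
  grind

theorem IsCherry.exists_mem {A : Set (Sym2 V)} {e : Sym2 V} (h : IsCherry A e) {a : V}
    (ha : a ∈ e) : ∃ f ∈ A, a ∈ f := by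
  obtain ⟨x, p, q, -, rfl, rfl⟩ := h
  rcases Sym2.mem_iff.1 ha with rfl | rfl <;> exact ⟨s(x, a), by simp⟩

theorem eq_pair_of_ncard_eq_two {α : Type*} {A : Set α} (hA : A.ncard = 2) {e f : α}
    (he : e ∈ A) (hf : f ∈ A) (hne : e ≠ f) : A = {e, f} :=
  (Set.eq_of_subset_of_ncard_le (Set.pair_subset he hf) (by rw [hA, Set.ncard_pair hne])
    (Set.finite_of_ncard_ne_zero (by lia))).symm

theorem IsCherry.of_mem {A : Set (Sym2 V)} (hA : A.ncard = 2) {x a b : V}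
    (hnodup : [x, a, b].Nodup) (ha : s(x, a) ∈ A) (hb : s(x, b) ∈ A) : IsCherry A s(a, b) :=
  ⟨x, a, b, hnodup, eq_pair_of_ncard_eq_two hA ha hb (by grind), rfl⟩

theorem exists_isCherry_of_triangle {A B : Set (Sym2 V)} (hA : A.ncard = 2) {a b c : V}
    (hnodup : [a, b, c].Nodup) (hab : s(a, b) ∈ A) (hac : s(a, c) ∈ A)
    (hbc : s(b, c) ∈ A ∪ B) : ∃ e ∈ B, IsCherry A e := by
  have := eq_pair_of_ncard_eq_two hA hab hac (by grind)
  exact ⟨s(b, c), hbc.resolve_left (by grind), .of_mem hA hnodup hab hac⟩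

theorem isCherry_or_isCherry_of_triangle {A B : Set (Sym2 V)} (hA : A.ncard = 2)
    (hB : B.ncard = 2) {a b c : V} (hnodup : [a, b, c].Nodup) (hab : s(a, b) ∈ A ∪ B)
    (hbc : s(b, c) ∈ A ∪ B) (hca : s(c, a) ∈ A ∪ B) :
    (∃ e ∈ B, IsCherry A e) ∨ ∃ e ∈ A, IsCherry B e := by
  have triA {x y z} := exists_isCherry_of_triangle (B := B) hA (a := x) (b := y) (c := z)
  have triB {x y z} := exists_isCherry_of_triangle (B := A) hB (a := x) (b := y) (c := z)
  -- Two of the three edges lie in the same set.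
  rcases hab with h₁ | h₁ <;> rcases hbc with h₂ | h₂ <;> rcases hca with h₃ | h₃ <;> grind

theorem isCherry_or_formSquare_of_square {A B : Set (Sym2 V)} (hA : A.ncard = 2)
    (hB : B.ncard = 2) {a b c d : V} (hnodup : [a, b, c, d].Nodup) (hab : s(a, b) ∈ A)
    (hbc : s(b, c) ∈ A ∪ B) (hcd : s(c, d) ∈ A ∪ B) (hda : s(d, a) ∈ A ∪ B) :
    (∃ e, IsCherry A e ∧ IsCherry B e) ∨ FormSquare A B := by
  have pairA {e f} := eq_pair_of_ncard_eq_two (e := e) (f := f) hA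
  have pairB {e f} := eq_pair_of_ncard_eq_two (e := e) (f := f) hB
  by_cases hbc' : s(b, c) ∈ A
  · have := pairA hab hbc' (by grind)
    have hcd' : s(c, d) ∈ B := by grind
    have hda' : s(d, a) ∈ B := by grind
    refine .inl ⟨s(a, c), .of_mem hA (x := b) (by grind) (by grind) hbc',
      .of_mem hB (x := d) (by grind) hda' (by grind)⟩
  by_cases hda' : s(d, a) ∈ A
  · have := pairA hab hda' (by grind)
    have hcd' : s(c, d) ∈ B := by grind
    have hbc' : s(b, c) ∈ B := by grind
    refine .inl ⟨s(b, d), .of_mem hA (x := a) (by grind) hab (by grind),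
      .of_mem hB (x := c) (by grind) (by grind) hcd'⟩
  have hB' := pairB (hbc.resolve_left hbc') (hda.resolve_left hda') (by grind)
  have hcd' : s(c, d) ∈ A := by grind
  exact .inr ⟨a, b, c, d, hnodup, pairA hab hcd' (by grind), hB'⟩

theorem isCherry_or_formSquare {A B : Set (Sym2 V)} (hA : A.ncard = 2) (hB : B.ncard = 2)
    (h : ¬ (fromEdgeSet (A ∪ B)).IsAcyclic) :
    (∃ e ∈ B, IsCherry A e) ∨ (∃ e ∈ A, IsCherry B e) ∨
      (∃ e, IsCherry A e ∧ IsCherry B e) ∨ FormSquare A B := by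
  have hfin : (A ∪ B).Finite := (Set.finite_of_ncard_ne_zero (by lia)).union
    (Set.finite_of_ncard_ne_zero (by lia))
  have hcard : (A ∪ B).ncard ≤ 4 := (Set.ncard_union_le A B).trans (by lia)
  rcases exists_triangle_or_square hfin hcard h with
    ⟨a, b, c, hnodup, hab, hbc, hca⟩ | ⟨a, b, c, d, hnodup, hab | hab, hbc, hcd, hda⟩
  · exact (isCherry_or_isCherry_of_triangle hA hB hnodup hab hbc hca).imp_right .inl
  · exact .inr (.inr (isCherry_or_formSquare_of_square hA hB hnodup hab hbc hcd hda))
  · rw [Set.union_comm] at hbc hcd hda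
    exact .inr (.inr ((isCherry_or_formSquare_of_square hB hA hnodup hab hbc hcd hda).imp
      (fun ⟨e, he⟩ ↦ ⟨e, he.symm⟩) .symm))

theorem FormSquare.exists_forall_mem_or_mem {A B : Set (Sym2 V)} (h : FormSquare A B) :
    ∃ e f, ∀ C, FormSquare A C → e ∈ C ∨ f ∈ C := by
  obtain ⟨a, b, c, d, -, rfl, -⟩ := h
  refine ⟨s(a, c), s(a, d), ?_⟩
  rintro C ⟨a', b', c', d', -, h, rfl⟩
  simp only [Set.pair_eq_pair_iff, Sym2.eq_iff] at h
  obtain ⟨⟨rfl, rfl⟩ | ⟨rfl, rfl⟩, ⟨rfl, rfl⟩ | ⟨rfl, rfl⟩⟩ |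
    ⟨⟨rfl, rfl⟩ | ⟨rfl, rfl⟩, ⟨rfl, rfl⟩ | ⟨rfl, rfl⟩⟩ := h <;> simp [Sym2.eq_swap]

theorem not_nodup_four_of_total_of_functional {α : Type*} {r : α → α → Prop}
    (htotal : ∀ a b, a ≠ b → r a b ∨ r b a) (hfun : ∀ a b c, r a b → r a c → b = c)
    (a b c d : α) : ¬ [a, b, c, d].Nodup := by
  intro hnodup
  -- Six pairs would be related, but each of the four elements is related to at most one other.
  simp only [List.nodup_cons, List.mem_cons, List.not_mem_nil, or_false, not_or] at hnodup
  have := htotal a b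
  have := htotal a c
  have := htotal a d
  have := htotal b c
  have := htotal b d
  have := htotal c d
  grind

section Family

variable {ι : Type*} {P : ι → Set (Sym2 V)}

theorem FormSquare.replace_right (hdisj : Pairwise (Disjoint on P))
    (hcard : ∀ i, (P i).ncard = 2)
    (hcyc : Pairwise fun i j ↦ ¬ (fromEdgeSet (P i ∪ P j)).IsAcyclic)
    {i j l : ι} (hij : i ≠ j) (h : FormSquare (P i) (P j)) (hil : i ≠ l) :
    FormSquare (P i) (P l) := by
  have not_cherry_i := h.not_isCherry_left
  have not_cherry_j := h.symm.not_isCherry_left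
  obtain rfl | hjl := eq_or_ne j l
  · exact h
  rcases isCherry_or_formSquare (hcard i) (hcard l) (hcyc hil) with
    ⟨e, -, he⟩ | ⟨e, hei, he⟩ | ⟨e, he, -⟩ | h'
  · exact absurd he (not_cherry_i e)
  · rcases isCherry_or_formSquare (hcard j) (hcard l) (hcyc hjl) with
      ⟨f, -, hf⟩ | ⟨f, hfj, hf⟩ | ⟨f, hf, -⟩ | h'
    · exact absurd hf (not_cherry_j f)
    · exact (Set.disjoint_left.1 (hdisj hij) hei (he.unique hf ▸ hfj)).elim
    · exact absurd hf (not_cherry_j f)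
    · exact absurd he (h'.symm.not_isCherry_left e)
  · exact absurd he (not_cherry_i e)
  · exact h'

theorem not_formSquare_of_four (hdisj : Pairwise (Disjoint on P))
    (hcard : ∀ i, (P i).ncard = 2)
    (hcyc : Pairwise fun i j ↦ ¬ (fromEdgeSet (P i ∪ P j)).IsAcyclic)
    {i j k l : ι} (hnodup : [i, j, k, l].Nodup) {m n : ι} (hmn : m ≠ n) :
    ¬ FormSquare (P m) (P n) := by
  intro h
  obtain ⟨e, f, hef⟩ := h.exists_forall_mem_or_mem
  have hcover (p) : m = p ∨ e ∈ P p ∨ f ∈ P p :=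
    or_iff_not_imp_left.2 fun hmp ↦ hef _ (h.replace_right hdisj hcard hcyc hmn hmp)
  have mem_unique {g p q} (hp : g ∈ P p) (hq : g ∈ P q) : p = q :=
    hdisj.eq (Set.not_disjoint_iff.2 ⟨g, hp, hq⟩)
  simp only [List.nodup_cons, List.mem_cons, List.not_mem_nil, or_false, not_or] at hnodup
  -- Besides `m`, only the two classes containing `e` and `f` are left for `i`, `j`, `k`, `l`.
  have hi := hcover i
  have hj := hcover j
  have hk := hcover k
  have hl := hcover l
  grind

theorem exists_isCherry_isCherry_of_four (hdisj : Pairwise (Disjoint on P))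
    (hcard : ∀ i, (P i).ncard = 2)
    (hcyc : Pairwise fun i j ↦ ¬ (fromEdgeSet (P i ∪ P j)).IsAcyclic)
    {i j k l : ι} (hnodup : [i, j, k, l].Nodup) :
    ∃ m n, m ≠ n ∧ ∃ e, IsCherry (P m) e ∧ IsCherry (P n) e := by
  by_contra! hno
  refine not_nodup_four_of_total_of_functional (r := fun m n ↦ ∃ e ∈ P n, IsCherry (P m) e)
    (fun m n hmn ↦ ?_) ?_ i j k l hnodup
  · have := isCherry_or_formSquare (hcard m) (hcard n) (hcyc hmn)
    have := not_formSquare_of_four hdisj hcard hcyc hnodup hmn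
    grind
  · rintro m n p ⟨e, hn, he⟩ ⟨f, hp, hf⟩
    exact hdisj.eq (Set.not_disjoint_iff.2 ⟨e, hn, he.unique hf ▸ hp⟩)

theorem isCherry_or_mem_of_isCherry_isCherry (hdisj : Pairwise (Disjoint on P))
    (hcard : ∀ i, (P i).ncard = 2)
    (hcyc : Pairwise fun i j ↦ ¬ (fromEdgeSet (P i ∪ P j)).IsAcyclic)
    {i j : ι} (hij : i ≠ j) {e : Sym2 V} (hi : IsCherry (P i) e) (hj : IsCherry (P j) e) (l : ι) :
    IsCherry (P l) e ∨ e ∈ P l := by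
  by_cases hil : i = l
  · exact .inl (hil ▸ hi)
  by_cases hjl : j = l
  · exact .inl (hjl ▸ hj)
  have := isCherry_or_formSquare (hcard i) (hcard l) (hcyc hil)
  have := isCherry_or_formSquare (hcard j) (hcard l) (hcyc hjl)
  have hdisj' {f} (hi : f ∈ P i) (hj : f ∈ P j) : False :=
    Set.disjoint_left.1 (hdisj hij) hi hj
  -- Otherwise the closing edge of `P l` would lie in both `P i` and `P j`.
  grind [IsCherry.unique, FormSquare.not_isCherry_left]

end Family

theorem exists_mem_of_not_isAcyclic_insert {S : Set (Sym2 V)} {u v : V}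
    (hS : (fromEdgeSet S).IsAcyclic) (h : ¬ (fromEdgeSet (insert s(u, v) S)).IsAcyclic) :
    ∃ e ∈ S, u ∈ e := by
  rw [Set.insert_eq, Set.union_comm, fromEdgeSet_union, ← edge,
    isAcyclic_sup_fromEdgeSet_iff, and_iff_right hS] at h
  push Not at h
  obtain ⟨⟨_ | ⟨hadj, -⟩⟩, huv, -⟩ := h
  · exact absurd rfl huv
  · exact ⟨_, hadj.1, Sym2.mem_mk_left ..⟩

theorem card_le_degree_of_forall_exists_mem {ι : Type*} [Fintype ι] {P : ι → Set (Sym2 V)}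
    {G : SimpleGraph V} {a : V} [Fintype (G.neighborSet a)] (hdisj : Pairwise (Disjoint on P))
    (hsub : ∀ i, P i ⊆ G.edgeSet) (h : ∀ i, ∃ e ∈ P i, a ∈ e) :
    Fintype.card ι ≤ G.degree a := by
  classical
  choose e he ha using h
  rw [← card_incidenceSet_eq_degree]
  refine Fintype.card_le_of_injective (fun i ↦ ⟨e i, hsub i (he i), ha i⟩) fun i j hij ↦ ?_
  exact hdisj.eq (Set.not_disjoint_iff.2 ⟨e i, he i, Subtype.mk.inj hij ▸ he j⟩)

theorem exists_forall_exists_mem_of_card {ι : Type*} [Fintype ι] {P : ι → Set (Sym2 V)}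
    (hdisj : Pairwise (Disjoint on P)) (hcard : ∀ i, (P i).ncard = 2)
    (hcyc : Pairwise fun i j ↦ ¬ (fromEdgeSet (P i ∪ P j)).IsAcyclic)
    (hι : 3 < Fintype.card ι) : ∃ a, ∀ i, ∃ e ∈ P i, a ∈ e := by
  obtain ⟨i, -, j, -, k, -, l, -, hnodup⟩ := Finset.three_lt_card.1 hι
  obtain ⟨m, n, hmn, e, hm, hn⟩ := exists_isCherry_isCherry_of_four hdisj hcard hcyc
    (show [i, j, k, l].Nodup by grind)
  induction e with | _ a b
  refine ⟨a, fun p ↦ ?_⟩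
  rcases isCherry_or_mem_of_isCherry_isCherry hdisj hcard hcyc hmn hm hn p with hp | hp
  · exact hp.exists_mem (Sym2.mem_mk_left a b)
  · exact ⟨s(a, b), hp, Sym2.mem_mk_left a b⟩

theorem card_le_max_three_maxDegree {ι : Type*} [Fintype ι] {P : ι → Set (Sym2 V)}
    {G : SimpleGraph V} [Fintype V] [DecidableRel G.Adj]
    (hdisj : Pairwise (Disjoint on P)) (hsub : ∀ i, P i ⊆ G.edgeSet)
    (hcard : ∀ i, (P i).ncard = 2)
    (hcyc : Pairwise fun i j ↦ ¬ (fromEdgeSet (P i ∪ P j)).IsAcyclic) :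
    Fintype.card ι ≤ max 3 G.maxDegree := by
  rw [le_max_iff, or_iff_not_imp_left, not_le]
  intro hι
  obtain ⟨a, ha⟩ := exists_forall_exists_mem_of_card hdisj hcard hcyc hι
  exact (card_le_degree_of_forall_exists_mem hdisj hsub ha).trans (G.degree_le_maxDegree a)

namespace IsCompleteForestPartition

variable {G : SimpleGraph V} {k : ℕ} {P : Fin k → Set (Sym2 V)}

theorem pairwise_disjoint (h : IsCompleteForestPartition G k P) : Pairwise (Disjoint on P) :=
  fun i j hij ↦ h.2.1 i j hij

theorem subset_edgeSet (h : IsCompleteForestPartition G k P) (i : Fin k) : P i ⊆ G.edgeSet :=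
  h.2.2.1 ▸ Set.subset_iUnion P i

theorem not_isAcyclic_union_s13 (h : IsCompleteForestPartition G k P) :
    Pairwise fun i j ↦ ¬ (fromEdgeSet (P i ∪ P j)).IsAcyclic :=
  fun i j hij ↦ h.2.2.2.2 i j hij

theorem sum_ncard [Finite V] (h : IsCompleteForestPartition G k P) :
    ∑ i, (P i).ncard = G.edgeSet.ncard := by
  rw [← h.2.2.1, Set.ncard_iUnion_of_finite (fun _ ↦ Set.toFinite _) h.pairwise_disjoint,
    finsum_eq_sum_of_fintype]

variable [Fintype V] [DecidableRel G.Adj]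

theorem le_maxDegree_of_ncard_eq_one (h : IsCompleteForestPartition G k P) {i : Fin k}
    (hi : (P i).ncard = 1) : k ≤ G.maxDegree := by
  obtain ⟨⟨u, v⟩, hi⟩ := Set.ncard_eq_one.1 hi
  have hu (j) : ∃ e ∈ P j, u ∈ e := by
    obtain rfl | hij := eq_or_ne i j
    · exact ⟨s(u, v), hi ▸ rfl, Sym2.mem_mk_left u v⟩
    · have hcyc : ¬ (fromEdgeSet (P i ∪ P j)).IsAcyclic := h.not_isAcyclic_union_s13 hij
      rw [hi, Set.singleton_union] at hcyc
      exact exists_mem_of_not_isAcyclic_insert (h.2.2.2.1 j) hcyc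
  simpa using (card_le_degree_of_forall_exists_mem h.pairwise_disjoint h.subset_edgeSet hu).trans
    (G.degree_le_maxDegree u)

theorem card_ncard_eq_two_le (h : IsCompleteForestPartition G k P) :
    #{i | (P i).ncard = 2} ≤ max 3 G.maxDegree := by
  rw [← Fintype.card_subtype]
  exact card_le_max_three_maxDegree (P := fun i : {i // (P i).ncard = 2} ↦ P i)
    (h.pairwise_disjoint.comp_of_injective Subtype.val_injective) (fun i ↦ h.subset_edgeSet i)
    Subtype.prop (h.not_isAcyclic_union_s13.comp_of_injective Subtype.val_injective)

theorem three_mul_le_of_ncard_ne_one (h : IsCompleteForestPartition G k P)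
    (h1 : ∀ i, (P i).ncard ≠ 1) :
    3 * k ≤ G.edgeSet.ncard + max 3 G.maxDegree := by
  have hle (i) : 3 ≤ (P i).ncard + if (P i).ncard = 2 then 1 else 0 := by
    have := h1 i
    have := (h.1 i).ncard_pos
    grind
  calc 3 * k = ∑ _i : Fin k, 3 := by simp [mul_comm]
    _ ≤ ∑ i, ((P i).ncard + if (P i).ncard = 2 then 1 else 0) := sum_le_sum fun i _ ↦ hle i
    _ = G.edgeSet.ncard + #{i | (P i).ncard = 2} := by
      rw [sum_add_distrib, h.sum_ncard, card_filter]
    _ ≤ G.edgeSet.ncard + max 3 G.maxDegree := by grw [h.card_ncard_eq_two_le]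

theorem le_max_maxDegree (h : IsCompleteForestPartition G k P) :
    k ≤ max G.maxDegree ((G.edgeSet.ncard + max 3 G.maxDegree) / 3) := by
  by_cases h1 : ∃ i, (P i).ncard = 1
  · obtain ⟨i, hi⟩ := h1
    exact le_max_of_le_left (h.le_maxDegree_of_ncard_eq_one hi)
  · push Not at h1
    refine le_max_of_le_right ((Nat.le_div_iff_mul_le three_pos).2 ?_)
    exact mul_comm k 3 ▸ h.three_mul_le_of_ncard_ne_one h1

end IsCompleteForestPartition

/-- A complete partition of the edges of `K₆` into six forests: on the vertices `0, 1, 2, 3`, two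
cherries over `s(0, 1)` and the pair of opposite edges `s(0, 1)`, `s(2, 3)`; the path `0, 4, 5, 1`;
and a star centred at each of `4` and `5`. -/
def forestPartitionK6 : Fin 6 → Finset (Sym2 (Fin 6)) :=
  ![{s(0, 2), s(1, 2)}, {s(0, 3), s(1, 3)}, {s(0, 1), s(2, 3)},
    {s(0, 4), s(4, 5), s(5, 1)}, {s(4, 1), s(4, 2), s(4, 3)}, {s(5, 0), s(5, 2), s(5, 3)}]

theorem isAcyclic_forestPartitionK6 (i : Fin 6) :
    (fromEdgeSet (forestPartitionK6 i : Set (Sym2 (Fin 6)))).IsAcyclic := by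
  have card_le : ∀ i, #(forestPartitionK6 i) ≤ 3 := by decide +kernel
  have no_triangle : ∀ i a b c, ¬ (s(a, b) ∈ forestPartitionK6 i ∧
      s(b, c) ∈ forestPartitionK6 i ∧ s(c, a) ∈ forestPartitionK6 i) := by decide +kernel
  by_contra h
  obtain ⟨n, v, -, hn, hS⟩ := exists_cycle_length_le_ncard (Set.toFinite _) h
  rw [Set.ncard_coe_finset] at hn
  obtain rfl : n = 0 := by have := card_le i; lia
  exact no_triangle i (v 0) (v 1) (v 2) ⟨hS 0, hS 1, hS 2⟩

theorem not_isAcyclic_union_forestPartitionK6 {i j : Fin 6} (hij : i < j) :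
    ¬ (fromEdgeSet
      (forestPartitionK6 i ∪ forestPartitionK6 j : Set (Sym2 (Fin 6)))).IsAcyclic := by
  rw [not_isAcyclic_fromEdgeSet_iff]
  simp only [← coe_union, mem_coe]
  match i, j, hij with
  | 0, 1, _ => exact ⟨1, ![0, 2, 1, 3], by decide, by decide⟩
  | 0, 2, _ => exact ⟨0, ![0, 2, 1], by decide, by decide⟩
  | 0, 3, _ => exact ⟨2, ![0, 2, 1, 5, 4], by decide, by decide⟩
  | 0, 4, _ => exact ⟨0, ![1, 2, 4], by decide, by decide⟩
  | 0, 5, _ => exact ⟨0, ![0, 2, 5], by decide, by decide⟩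
  | 1, 2, _ => exact ⟨0, ![0, 3, 1], by decide, by decide⟩
  | 1, 3, _ => exact ⟨2, ![0, 3, 1, 5, 4], by decide, by decide⟩
  | 1, 4, _ => exact ⟨0, ![1, 3, 4], by decide, by decide⟩
  | 1, 5, _ => exact ⟨0, ![0, 3, 5], by decide, by decide⟩
  | 2, 3, _ => exact ⟨1, ![0, 1, 5, 4], by decide, by decide⟩
  | 2, 4, _ => exact ⟨0, ![2, 3, 4], by decide, by decide⟩
  | 2, 5, _ => exact ⟨0, ![2, 3, 5], by decide, by decide⟩
  | 3, 4, _ => exact ⟨0, ![1, 5, 4], by decide, by decide⟩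
  | 3, 5, _ => exact ⟨0, ![0, 4, 5], by decide, by decide⟩
  | 4, 5, _ => exact ⟨1, ![2, 4, 3, 5], by decide, by decide⟩
  | 5, j, hij => exact absurd hij j.le_last.not_gt

theorem isCompleteForestPartition_forestPartitionK6 :
    IsCompleteForestPartition (⊤ : SimpleGraph (Fin 6)) 6 fun i ↦ forestPartitionK6 i := by
  refine ⟨fun i ↦ ?_, fun i j hij ↦ ?_, ?_, isAcyclic_forestPartitionK6, fun i j hij ↦ ?_⟩
  · rw [coe_nonempty]
    decide +revert +kernel
  · rw [disjoint_coe]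
    decide +revert +kernel
  · have : univ.biUnion forestPartitionK6 = (⊤ : SimpleGraph (Fin 6)).edgeFinset := by
      decide +kernel
    simpa using congrArg (fun E : Finset _ ↦ (E : Set (Sym2 (Fin 6)))) this
  · rcases hij.lt_or_gt with h | h
    · exact not_isAcyclic_union_forestPartitionK6 h
    · rw [Set.union_comm]
      exact not_isAcyclic_union_forestPartitionK6 h

end

/-- The achromatic arboricity of `K_6` equals `6`. -/
theorem achromaticArboricity_K6 :
    achromaticArboricity (⊤ : SimpleGraph (Fin 6)) = 6 := by
  refine IsGreatest.csSup_eq ⟨⟨_, isCompleteForestPartition_forestPartitionK6⟩, ?_⟩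
  rintro k ⟨P, hP⟩
  have hdegree : (⊤ : SimpleGraph (Fin 6)).maxDegree = 5 := by simp
  have hedges : (⊤ : SimpleGraph (Fin 6)).edgeSet.ncard = 15 := by
    rw [← SimpleGraph.coe_edgeFinset, Set.ncard_coe_finset,
      SimpleGraph.card_edgeFinset_top_eq_card_choose_two, Fintype.card_fin]
    rfl
  exact hP.le_max_maxDegree.trans (by simp only [hdegree, hedges]; norm_num)
end
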